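/- arXiv:2204.14150 — 7 statements merged into one kernel-verified Lean document; each statement's English description precedes it below -/
import Mathlib

section
/- Let G be a finite simple connected graph. Then the revised Szeged index of G can be written as a sum over ordered pairs of vertices: Sz*(G) = (1/2) · Σ_{(u,v) ∈ V(G)×V(G)} ( dis_G(u,v) + deq_G(u,u) − (1/2)·deq_G(u,v) ). -/
open Finset

attribute [local instance] Classical.propDecidable

variable {V : Type*}

/-- `n_G(s,t)`: the number of vertices strictly closer to `s` than to `t`. -/
noncomputable def closerCount [Fintype V] (G : SimpleGraph V) (s t : V) : ℕ :=
  (Finset.univ.filter fun w => G.dist w s < G.dist w t).card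

/-- `o_G(s,t)`: the number of vertices equidistant from `s` and `t`. -/
noncomputable def equidistCount [Fintype V] (G : SimpleGraph V) (s t : V) : ℕ :=
  (Finset.univ.filter fun w => G.dist w s = G.dist w t).card

lemma equidistCount_comm [Fintype V] (G : SimpleGraph V) (s t : V) :
    equidistCount G s t = equidistCount G t s := by
  unfold equidistCount
  congr 1
  ext w
  simp only [Finset.mem_filter]
  exact and_congr_right fun _ => ⟨Eq.symm, Eq.symm⟩

/-- `o_G` as a function on unordered pairs (edges). -/
noncomputable def equidistSym2 [Fintype V] (G : SimpleGraph V) : Sym2 V → ℕ :=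
  Sym2.lift ⟨fun s t => equidistCount G s t, fun s t => equidistCount_comm G s t⟩

/-- The Wiener index: the sum of distances over unordered pairs of vertices. -/
noncomputable def wiener [Fintype V] (G : SimpleGraph V) : ℕ :=
  ∑ p : Sym2 V, Sym2.lift ⟨fun u v => G.dist u v, fun _ _ => G.dist_comm⟩ p

/-- The Szeged index `Sz(G) = Σ_{{s,t} ∈ E(G)} n_G(s,t) n_G(t,s)`. -/
noncomputable def szeged [Fintype V] (G : SimpleGraph V) : ℕ :=
  ∑ e ∈ G.edgeFinset,
    Sym2.lift ⟨fun s t => closerCount G s t * closerCount G t s,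
      fun _ _ => Nat.mul_comm _ _⟩ e

/-- The revised Szeged index
`Sz*(G) = Σ_{{s,t} ∈ E(G)} (n_G(s,t) + o_G(s,t)/2) (n_G(t,s) + o_G(t,s)/2)`. -/
noncomputable def revisedSzeged [Fintype V] (G : SimpleGraph V) : ℚ :=
  ∑ e ∈ G.edgeFinset,
    Sym2.lift ⟨fun s t =>
      ((closerCount G s t : ℚ) + (equidistCount G s t : ℚ) / 2) *
        ((closerCount G t s : ℚ) + (equidistCount G t s : ℚ) / 2),
      fun _ _ => mul_comm _ _⟩ e

/-- An edge `{s,t}` is `(u,v)`-distance-disparate if `d(u,s) < d(u,t)` and `d(v,s) > d(v,t)`,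
or `d(u,s) > d(u,t)` and `d(v,s) < d(v,t)`. -/
def IsDisparate (G : SimpleGraph V) (u v : V) : Sym2 V → Prop :=
  Sym2.lift ⟨fun s t =>
    (G.dist u s < G.dist u t ∧ G.dist v t < G.dist v s) ∨
      (G.dist u t < G.dist u s ∧ G.dist v s < G.dist v t),
    fun _ _ => propext or_comm⟩

/-- `dis_G(u,v)`: the number of `(u,v)`-distance-disparate edges of `G`. -/
noncomputable def disCount [Fintype V] (G : SimpleGraph V) (u v : V) : ℕ :=
  (G.edgeFinset.filter (IsDisparate G u v)).card

/-- An edge `{s,t}` is `(u,v)`-distance-equal if `d(u,s) = d(u,t)` and `d(v,s) = d(v,t)`. -/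
def IsDistEqual (G : SimpleGraph V) (u v : V) : Sym2 V → Prop :=
  Sym2.lift ⟨fun s t => G.dist u s = G.dist u t ∧ G.dist v s = G.dist v t,
    fun _ _ => propext ⟨fun h => ⟨h.1.symm, h.2.symm⟩, fun h => ⟨h.1.symm, h.2.symm⟩⟩⟩

/-- `deq_G(u,v)`: the number of `(u,v)`-distance-equal edges of `G`. -/
noncomputable def deqCount [Fintype V] (G : SimpleGraph V) (u v : V) : ℕ :=
  (G.edgeFinset.filter (IsDistEqual G u v)).card

/-- A subgraph without cut vertices: it is connected and deleting any single vertex leaves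
it preconnected. -/
def NoCutVertexSub (G : SimpleGraph V) (H : G.Subgraph) : Prop :=
  H.Connected ∧ ∀ v : V, ((H.deleteVerts {v}).coe.Preconnected)

/-- A block of `G`: a maximal connected subgraph without a cut vertex. -/
def IsBlock (G : SimpleGraph V) (B : G.Subgraph) : Prop :=
  NoCutVertexSub G B ∧ ∀ H : G.Subgraph, NoCutVertexSub G H → B ≤ H → B = H

/-- The subgraph `B` is a single edge together with its two endpoints. -/
def IsEdgeBlock (G : SimpleGraph V) (B : G.Subgraph) : Prop :=
  ∃ (u v : V) (h : G.Adj u v), B = G.subgraphOfAdj h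

/-- The subgraph `B` is a cycle (of some length `n ≥ 3`). -/
def IsCycleBlock (G : SimpleGraph V) (B : G.Subgraph) : Prop :=
  ∃ n : ℕ, 3 ≤ n ∧ Nonempty (B.coe ≃g SimpleGraph.cycleGraph n)

/-- A cactus graph: a connected graph in which every block is an edge or a cycle. -/
def IsCactus (G : SimpleGraph V) : Prop :=
  G.Connected ∧ ∀ B : G.Subgraph, IsBlock G B → IsEdgeBlock G B ∨ IsCycleBlock G B
/-- The contribution of a single pair `s, t`, summed over all ordered pairs of vertices. -/
lemma revisedSzeged_edge_aux [Fintype V] (G : SimpleGraph V) (s t : V) :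
    ((closerCount G s t : ℚ) + (equidistCount G s t : ℚ) / 2) *
        ((closerCount G t s : ℚ) + (equidistCount G t s : ℚ) / 2) =
      (1 / 2 : ℚ) * ∑ u : V, ∑ v : V,
        ((if IsDisparate G u v s(s, t) then (1 : ℚ) else 0)
          + (if IsDistEqual G u u s(s, t) then (1 : ℚ) else 0)
          - (1 / 2 : ℚ) * (if IsDistEqual G u v s(s, t) then (1 : ℚ) else 0)) := by
  obtain ⟨A, hA⟩ : ∃ A : V → ℚ, A = fun w => if G.dist w s < G.dist w t then 1 else 0 :=
    ⟨_, rfl⟩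
  obtain ⟨B, hB⟩ : ∃ B : V → ℚ, B = fun w => if G.dist w t < G.dist w s then 1 else 0 :=
    ⟨_, rfl⟩
  obtain ⟨O, hO⟩ : ∃ O : V → ℚ, O = fun w => if G.dist w s = G.dist w t then 1 else 0 :=
    ⟨_, rfl⟩
  have ha : (closerCount G s t : ℚ) = ∑ w, A w := by
    simp [closerCount, hA, Finset.sum_boole]
  have hb : (closerCount G t s : ℚ) = ∑ w, B w := by
    simp [closerCount, hB, Finset.sum_boole]
  have ho : (equidistCount G s t : ℚ) = ∑ w, O w := by
    simp [equidistCount, hO, Finset.sum_boole]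
  have key : ∀ u v : V,
      ((if IsDisparate G u v s(s, t) then (1 : ℚ) else 0)
          + (if IsDistEqual G u u s(s, t) then (1 : ℚ) else 0)
          - (1 / 2 : ℚ) * (if IsDistEqual G u v s(s, t) then (1 : ℚ) else 0))
        = A u * B v + B u * A v + O u * A v + O u * B v + (1 / 2) * (O u * O v) := by
    intro u v
    simp only [IsDisparate, IsDistEqual, Sym2.lift_mk, hA, hB, hO]
    have tri : ∀ a b : ℕ, (a < b ∧ ¬ b < a ∧ a ≠ b) ∨ (¬ a < b ∧ ¬ b < a ∧ a = b) ∨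
        (¬ a < b ∧ b < a ∧ a ≠ b) := by
      intro a b
      omega
    rcases tri (G.dist u s) (G.dist u t) with ⟨h1, h2, h3⟩ | ⟨h1, h2, h3⟩ | ⟨h1, h2, h3⟩ <;>
    rcases tri (G.dist v s) (G.dist v t) with ⟨k1, k2, k3⟩ | ⟨k1, k2, k3⟩ | ⟨k1, k2, k3⟩ <;>
    simp only [h1, h2, h3, k1, k2, k3, lt_irrefl, if_true, if_false, and_true, and_false,
      or_true, or_false, and_self, or_self] <;> norm_num
  rw [equidistCount_comm G t s, ha, hb, ho]
  simp only [key, Finset.sum_add_distrib, ← Finset.mul_sum, ← Finset.sum_mul]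
  ring

/-- **Theorem (revised Szeged index as a vertex sum).**
For a finite simple connected graph `G`,
`Sz*(G) = (1/2) Σ_{u,v ∈ V(G)} (dis_G(u,v) + deq_G(u,u) - (1/2) deq_G(u,v))`. -/
theorem revisedSzeged_eq_vertex_sum [Fintype V] (G : SimpleGraph V) (hG : G.Connected) :
    revisedSzeged G =
      (1 / 2 : ℚ) * ∑ u : V, ∑ v : V,
        ((disCount G u v : ℚ) + (deqCount G u u : ℚ)
          - (1 / 2 : ℚ) * (deqCount G u v : ℚ)) := by
  have hdis : ∀ u v, (disCount G u v : ℚ) =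
      ∑ e ∈ G.edgeFinset, if IsDisparate G u v e then (1 : ℚ) else 0 := by
    intro u v
    simp [disCount, Finset.sum_boole]
  have hdeq : ∀ u v, (deqCount G u v : ℚ) =
      ∑ e ∈ G.edgeFinset, if IsDistEqual G u v e then (1 : ℚ) else 0 := by
    intro u v
    simp [deqCount, Finset.sum_boole]
  simp only [hdis, hdeq, Finset.mul_sum (s := G.edgeFinset), ← Finset.sum_add_distrib,
    ← Finset.sum_sub_distrib]
  have hswap : ∀ f : V → V → Sym2 V → ℚ, ∑ u, ∑ v, ∑ e ∈ G.edgeFinset, f u v e =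
      ∑ e ∈ G.edgeFinset, ∑ u, ∑ v, f u v e := by
    intro f
    rw [Finset.sum_comm]
    rw [Finset.sum_congr rfl fun v _ => Finset.sum_comm, Finset.sum_comm]
    exact Finset.sum_congr rfl fun e _ => Finset.sum_comm
  rw [hswap, Finset.mul_sum, revisedSzeged]
  refine Finset.sum_congr rfl fun e _ => ?_
  induction e using Sym2.ind with
  | _ s t => exact revisedSzeged_edge_aux G s t
end

section
/- Let G be a finite simple connected graph with n vertices. Then the difference between the revised Szeged index and the Szeged index of G satisfies Sz*(G) − Sz(G) = (1/2)·n·Σ_{u ∈ V(G)} deq_G(u,u) − (1/4)·Σ_{(u,v) ∈ V(G)×V(G)} deq_G(u,v). -/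
open Finset

attribute [local instance] Classical.propDecidable

variable {V : Type*}

lemma aux_count [Fintype V] (G : SimpleGraph V) (s t : V) :
    (closerCount G s t : ℚ) + closerCount G t s + equidistCount G s t = Fintype.card V := by
  unfold closerCount equidistCount
  rw [Finset.card_filter, Finset.card_filter, Finset.card_filter, Fintype.card,
    Finset.card_eq_sum_ones]
  push_cast
  rw [← Finset.sum_add_distrib, ← Finset.sum_add_distrib]
  refine Finset.sum_congr rfl fun w _ => ?_
  rcases lt_trichotomy (G.dist w s) (G.dist w t) with h | h | h
  · simp [h, h.not_gt, h.ne]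
  · simp [h]
  · simp [h, h.not_gt, h.ne']

lemma aux_deq [Fintype V] (G : SimpleGraph V) (u v : V) :
    (deqCount G u v : ℚ) = ∑ e ∈ G.edgeFinset, if IsDistEqual G u v e then (1 : ℚ) else 0 := by
  unfold deqCount
  rw [Finset.card_filter]
  push_cast
  rfl

lemma aux_diag [Fintype V] (G : SimpleGraph V) (s t : V) :
    ∑ u : V, (if IsDistEqual G u u s(s, t) then (1 : ℚ) else 0) = equidistCount G s t := by
  unfold equidistCount
  rw [Finset.card_filter]
  push_cast
  refine Finset.sum_congr rfl fun u _ => ?_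
  simp [IsDistEqual]

lemma aux_pairs [Fintype V] (G : SimpleGraph V) (s t : V) :
    ∑ u : V, ∑ v : V, (if IsDistEqual G u v s(s, t) then (1 : ℚ) else 0)
      = (equidistCount G s t : ℚ) * equidistCount G s t := by
  unfold equidistCount
  rw [Finset.card_filter]
  push_cast
  rw [Finset.sum_mul_sum]
  refine Finset.sum_congr rfl fun u _ => Finset.sum_congr rfl fun v _ => ?_
  by_cases h1 : G.dist u s = G.dist u t <;> by_cases h2 : G.dist v s = G.dist v t <;>
    simp [IsDistEqual, h1, h2]

/-- **Corollary (difference of the Szeged indices, vertex form).**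
For a finite simple connected graph `G` with `n` vertices,
`Sz*(G) - Sz(G) = (1/2)·n·Σ_{u ∈ V(G)} deq_G(u,u) - (1/4)·Σ_{u,v ∈ V(G)} deq_G(u,v)`. -/
theorem revisedSzeged_sub_szeged_eq_vertex_sum [Fintype V] (G : SimpleGraph V)
    (hG : G.Connected) :
    revisedSzeged G - (szeged G : ℚ) =
      (1 / 2 : ℚ) * (Fintype.card V : ℚ) * ∑ u : V, (deqCount G u u : ℚ)
        - (1 / 4 : ℚ) * ∑ u : V, ∑ v : V, (deqCount G u v : ℚ) := by
  have h1 : ∑ u : V, (deqCount G u u : ℚ)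
      = ∑ e ∈ G.edgeFinset, ∑ u : V, if IsDistEqual G u u e then (1 : ℚ) else 0 := by
    simp only [aux_deq]
    exact Finset.sum_comm
  have h2 : ∑ u : V, ∑ v : V, (deqCount G u v : ℚ)
      = ∑ e ∈ G.edgeFinset, ∑ u : V, ∑ v : V,
          if IsDistEqual G u v e then (1 : ℚ) else 0 := by
    simp only [aux_deq]
    rw [Finset.sum_comm (s := G.edgeFinset)]
    exact Finset.sum_congr rfl fun u _ => Finset.sum_comm
  rw [h1, h2, Finset.mul_sum, Finset.mul_sum, ← Finset.sum_sub_distrib]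
  unfold revisedSzeged szeged
  rw [Nat.cast_sum, ← Finset.sum_sub_distrib]
  refine Finset.sum_congr rfl fun e _ => ?_
  induction e using Sym2.ind with
  | _ s t =>
    rw [aux_diag, aux_pairs]
    simp only [Sym2.lift_mk]
    rw [equidistCount_comm G t s, ← aux_count G s t]
    push_cast
    ring
end

section
/- Let C be the cycle graph on n ≥ 3 vertices and let u and v be two distinct vertices of C. Then dis_C(u,v) = 2·d_C(u,v) if n is even, and dis_C(u,v) = 2·d_C(u,v) − 1 if n is odd. -/
open Finset

attribute [local instance] Classical.propDecidable

variable {V : Type*}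

/-- The vertex reached from `a` after `k` steps around the cycle. -/
def cycVert (n : ℕ) (hn : 0 < n) (a k : ℕ) : Fin n := ⟨(a + k) % n, Nat.mod_lt _ hn⟩

lemma cyc_adj_iff (n : ℕ) (hn : 3 ≤ n) (x y : Fin n) :
    (SimpleGraph.cycleGraph n).Adj x y ↔
      (y.val = x.val + 1 ∨ x.val = y.val + 1 ∨ (x.val = 0 ∧ y.val + 1 = n) ∨
        (y.val = 0 ∧ x.val + 1 = n)) := by
  have key : ∀ p q : Fin n, (p - q).val = 1 ↔
      (p.val = q.val + 1 ∨ (p.val = 0 ∧ q.val + 1 = n)) := by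
    intro p q
    have hp := p.isLt
    have hq := q.isLt
    rw [Fin.sub_def]
    simp only
    rcases Nat.lt_or_ge (n - q.val + p.val) n with h | h
    · rw [Nat.mod_eq_of_lt h]; omega
    · rw [Nat.mod_eq_sub_mod h, Nat.mod_eq_of_lt (by omega)]; omega
  rw [SimpleGraph.cycleGraph_adj', key, key]
  omega

lemma cycVert_val (n : ℕ) (hn : 0 < n) (a k : ℕ) (ha : a < n) (hk : k ≤ n) :
    (a + k < n ∧ (cycVert n hn a k).val = a + k) ∨
      (n ≤ a + k ∧ (cycVert n hn a k).val + n = a + k) := by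
  unfold cycVert
  simp only
  rcases Nat.lt_or_ge (a + k) n with h | h
  · left; exact ⟨h, Nat.mod_eq_of_lt h⟩
  · right
    rw [Nat.mod_eq_sub_mod h, Nat.mod_eq_of_lt (by omega)]; omega

lemma cycVert_adj (n : ℕ) (hn : 3 ≤ n) (a k : ℕ) :
    (SimpleGraph.cycleGraph n).Adj (cycVert n (by omega) a k) (cycVert n (by omega) a (k + 1)) := by
  rw [cyc_adj_iff n hn]
  unfold cycVert
  simp only
  have h1 : (a + k) % n < n := Nat.mod_lt _ (by omega)
  have h2 : (a + (k + 1)) % n = ((a + k) % n + 1) % n := by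
    rw [← add_assoc, Nat.mod_add_mod]
  rw [h2]
  rcases Nat.lt_or_ge ((a + k) % n + 1) n with h | h
  · rw [Nat.mod_eq_of_lt h]; omega
  · have h3 : (a + k) % n + 1 = n := by omega
    rw [h3, Nat.mod_self]; omega

lemma cyc_reach (n : ℕ) (hn : 3 ≤ n) (x y : Fin n) :
    (SimpleGraph.cycleGraph n).Reachable x y := SimpleGraph.cycleGraph_preconnected x y

lemma cyc_upper (n : ℕ) (hn : 3 ≤ n) (a j k : ℕ) :
    (SimpleGraph.cycleGraph n).dist (cycVert n (by omega) a j) (cycVert n (by omega) a (j + k))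
      ≤ k := by
  have : ∃ w : (SimpleGraph.cycleGraph n).Walk (cycVert n (by omega) a j)
      (cycVert n (by omega) a (j + k)), w.length = k := by
    induction k with
    | zero => exact ⟨SimpleGraph.Walk.nil, rfl⟩
    | succ k ih =>
      obtain ⟨w, hw⟩ := ih
      refine ⟨w.concat (cycVert_adj n hn a (j + k)), ?_⟩
      rw [SimpleGraph.Walk.length_concat, hw]
  obtain ⟨w, hw⟩ := this
  exact (SimpleGraph.dist_le w).trans hw.le

/-- Cyclic distance. -/
def cycD (n a b : ℕ) : ℕ := min ((a - b) + (b - a)) (n - ((a - b) + (b - a)))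

lemma cyc_lower (n : ℕ) (hn : 3 ≤ n) (x y : Fin n) :
    cycD n x.val y.val ≤ (SimpleGraph.cycleGraph n).dist x y := by
  obtain ⟨w, hw⟩ := (cyc_reach n hn x y).exists_walk_length_eq_dist
  rw [← hw]
  clear hw
  induction w with
  | nil => simp [cycD]
  | @cons p q r h w ih =>
    rw [SimpleGraph.Walk.length_cons]
    rw [cyc_adj_iff n hn] at h
    have hp := p.isLt
    have hq := q.isLt
    have hr := r.isLt
    unfold cycD at *
    omega

lemma cyc_dist_le (n : ℕ) (hn : 3 ≤ n) (a j k : ℕ) (ha : a < n) (hjk : j ≤ k) (hk : k ≤ n) :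
    (SimpleGraph.cycleGraph n).dist (cycVert n (by omega) a j) (cycVert n (by omega) a k)
      = min (k - j) (n - (k - j)) := by
  apply le_antisymm
  · apply le_min
    · have := cyc_upper n hn a j (k - j)
      rwa [show j + (k - j) = k by omega] at this
    · have := cyc_upper n hn a k (n - (k - j))
      rw [show k + (n - (k - j)) = j + n by omega] at this
      have e : cycVert n (by omega) a (j + n) = cycVert n (by omega) a j := by
        unfold cycVert
        simp [← add_assoc]
      rw [e, SimpleGraph.dist_comm] at this
      exact this
  · refine le_trans ?_ (cyc_lower n hn _ _)
    have h1 := cycVert_val n (by omega) a j ha (by omega)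
    have h2 := cycVert_val n (by omega) a k ha (by omega)
    unfold cycD
    omega

lemma cyc_dist (n : ℕ) (hn : 3 ≤ n) (a j k : ℕ) (ha : a < n) (hj : j ≤ n) (hk : k ≤ n) :
    (SimpleGraph.cycleGraph n).dist (cycVert n (by omega) a j) (cycVert n (by omega) a k)
      = cycD n j k := by
  unfold cycD
  rcases le_total j k with h | h
  · rw [cyc_dist_le n hn a j k ha h hk]; omega
  · rw [SimpleGraph.dist_comm, cyc_dist_le n hn a k j ha h hj]; omega

lemma disCount_comm (n : ℕ) (u v : Fin n) :
    disCount (SimpleGraph.cycleGraph n) u v = disCount (SimpleGraph.cycleGraph n) v u := by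
  unfold disCount
  congr 1
  apply Finset.filter_congr
  intro e _
  induction e using Sym2.ind with
  | _ s t =>
    simp only [IsDisparate, Sym2.lift_mk]
    tauto

lemma cyc_vert_surj (n : ℕ) (hn : 3 ≤ n) (u x : Fin n) :
    ∃ k < n, cycVert n (by omega) u.val k = x := by
  have hu := u.isLt
  have hx := x.isLt
  rcases le_total u.val x.val with h | h
  · refine ⟨x.val - u.val, by omega, Fin.ext ?_⟩
    have := cycVert_val n (by omega) u.val (x.val - u.val) hu (by omega)
    omega
  · by_cases h0 : x.val = u.val
    · refine ⟨0, by omega, Fin.ext ?_⟩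
      have := cycVert_val n (by omega) u.val 0 hu (by omega)
      omega
    · refine ⟨x.val + n - u.val, by omega, Fin.ext ?_⟩
      have := cycVert_val n (by omega) u.val (x.val + n - u.val) hu (by omega)
      omega

lemma cyc_count (n : ℕ) (hn : 3 ≤ n) (u : Fin n) (D : ℕ) (hD0 : 0 < D) (hD : 2 * D ≤ n) :
    disCount (SimpleGraph.cycleGraph n) (cycVert n (by omega) u.val 0)
      (cycVert n (by omega) u.val D) = D + (n / 2 + D - (n + 1) / 2) := by
  have hu := u.isLt
  have hset : (SimpleGraph.cycleGraph n).edgeFinset.filter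
      (IsDisparate (SimpleGraph.cycleGraph n) (cycVert n (by omega) u.val 0)
      (cycVert n (by omega) u.val D)) =
      (Finset.Ico 0 D ∪ Finset.Ico ((n + 1) / 2) (n / 2 + D)).image
        (fun k => s(cycVert n (by omega) u.val k, cycVert n (by omega) u.val (k + 1))) := by
    have hdis : ∀ k < n, (IsDisparate (SimpleGraph.cycleGraph n) (cycVert n (by omega) u.val 0)
        (cycVert n (by omega) u.val D)
        s(cycVert n (by omega) u.val k, cycVert n (by omega) u.val (k + 1)) ↔
        k ∈ Finset.Ico 0 D ∪ Finset.Ico ((n + 1) / 2) (n / 2 + D)) := by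
      intro k hk
      simp only [IsDisparate, Sym2.lift_mk, Finset.mem_union, Finset.mem_Ico]
      rw [cyc_dist n hn _ _ _ hu (by omega) (by omega),
        cyc_dist n hn _ _ _ hu (by omega) (by omega),
        cyc_dist n hn _ _ _ hu (by omega) (by omega),
        cyc_dist n hn _ _ _ hu (by omega) (by omega)]
      unfold cycD
      omega
    have hedge : ∀ x y : Fin n, (SimpleGraph.cycleGraph n).Adj x y → ∃ k < n,
        s(cycVert n (by omega) u.val k, cycVert n (by omega) u.val (k + 1)) = s(x, y) := by
      intro x y h
      rw [cyc_adj_iff n hn] at h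
      have hx := x.isLt
      have hy := y.isLt
      have key : ∀ p q : Fin n, (q.val = p.val + 1 ∨ (q.val = 0 ∧ p.val + 1 = n)) → ∃ k < n,
          s(cycVert n (by omega) u.val k, cycVert n (by omega) u.val (k + 1)) = s(p, q) := by
        intro p q hpq
        obtain ⟨k, hk, rfl⟩ := cyc_vert_surj n hn u p
        refine ⟨k, hk, ?_⟩
        congr 2
        apply Fin.ext
        have hq := q.isLt
        have h1 := cycVert_val n (by omega) u.val k hu (by omega)
        have h2 := cycVert_val n (by omega) u.val (k + 1) hu (by omega)
        have h3 := (cycVert n (by omega) u.val (k + 1)).isLt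
        omega
      by_cases h' : y.val = x.val + 1 ∨ (y.val = 0 ∧ x.val + 1 = n)
      · exact key x y h'
      · rw [Sym2.eq_swap]
        exact key y x (by omega)
    ext e
    simp only [Finset.mem_filter, Finset.mem_image, SimpleGraph.mem_edgeFinset]
    constructor
    · rintro ⟨he, hd⟩
      induction e using Sym2.ind with
      | _ x y =>
        obtain ⟨k, hk, hke⟩ := hedge x y he
        rw [← hke] at hd
        exact ⟨k, (hdis k hk).1 hd, hke⟩
    · rintro ⟨k, hk, rfl⟩
      have hkn : k < n := by
        simp only [Finset.mem_union, Finset.mem_Ico] at hk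
        omega
      exact ⟨cycVert_adj n hn _ k, (hdis k hkn).2 hk⟩
  have hcard := congrArg Finset.card hset
  unfold disCount
  refine Eq.trans ?_ (hcard.trans ?_)
  · congr!
  rw [Finset.card_image_of_injOn, Finset.card_union_of_disjoint]
  · simp
  · rw [Finset.disjoint_left]
    intro k h1 h2
    simp only [Finset.mem_Ico] at h1 h2
    omega
  · intro j hj k hk h
    simp only [Finset.coe_union, Set.mem_union, Finset.mem_coe, Finset.mem_Ico] at hj hk
    simp only [Sym2.eq_iff, Fin.ext_iff] at h
    have h1 := cycVert_val n (by omega) u.val k hu (by omega)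
    have h2 := cycVert_val n (by omega) u.val (k + 1) hu (by omega)
    have h3 := cycVert_val n (by omega) u.val j hu (by omega)
    have h4 := cycVert_val n (by omega) u.val (j + 1) hu (by omega)
    omega

lemma cyc_main (n : ℕ) (hn : 3 ≤ n) (u : Fin n) (D : ℕ) (hD0 : 0 < D) (hD : 2 * D ≤ n) :
    disCount (SimpleGraph.cycleGraph n) u (cycVert n (by omega) u.val D) =
      if Even n then 2 * (SimpleGraph.cycleGraph n).dist u (cycVert n (by omega) u.val D)
      else 2 * (SimpleGraph.cycleGraph n).dist u (cycVert n (by omega) u.val D) - 1 := by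
  have hu := u.isLt
  have h0 : cycVert n (by omega) u.val 0 = u := by
    apply Fin.ext
    have := cycVert_val n (by omega) u.val 0 hu (by omega)
    omega
  have h1 := cyc_count n hn u D hD0 hD
  have h2 := cyc_dist n hn u.val 0 D hu (by omega) (by omega)
  rw [h0] at h1 h2
  rw [h1, h2]
  unfold cycD
  split_ifs with h
  · rw [Nat.even_iff] at h; omega
  · rw [Nat.even_iff] at h; omega

/-- **Lemma (distance-disparate edges on a cycle).**
For distinct vertices `u ≠ v` of the cycle graph `C` on `n ≥ 3` vertices,
`dis_C(u,v) = 2·d_C(u,v)` if `n` is even and `dis_C(u,v) = 2·d_C(u,v) - 1` if `n` is odd. -/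
theorem disCount_cycleGraph (n : ℕ) (hn : 3 ≤ n) (u v : Fin n) (huv : u ≠ v) :
    disCount (SimpleGraph.cycleGraph n) u v =
      if Even n then 2 * (SimpleGraph.cycleGraph n).dist u v
      else 2 * (SimpleGraph.cycleGraph n).dist u v - 1 := by
  obtain ⟨D, hD, rfl⟩ := cyc_vert_surj n hn u v
  have hu := u.isLt
  have hval := cycVert_val n (by omega) u.val D hu (by omega)
  have hD0 : 0 < D := by
    rcases Nat.eq_zero_or_pos D with h | h
    · exfalso
      apply huv
      apply Fin.ext
      omega
    · exact h
  by_cases h2 : 2 * D ≤ n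
  · exact cyc_main n hn u D hD0 h2
  · have hv := (cycVert n (by omega) u.val D).isLt
    have hval' := cycVert_val n (by omega) (cycVert n (by omega) u.val D).val (n - D) hv (by omega)
    have hback : cycVert n (by omega) (cycVert n (by omega) u.val D).val (n - D) = u := by
      apply Fin.ext
      omega
    have := cyc_main n hn (cycVert n (by omega) u.val D) (n - D) (by omega) (by omega)
    rw [hback] at this
    rw [disCount_comm, SimpleGraph.dist_comm]
    exact this
end

section
/- Let u and v be vertices of a finite simple connected graph G, and let 𝔅 be the set of blocks of G obtained from the block-cut-vertex decomposition. For each block B in 𝔅, let u_B and v_B denote the vertices of B closest (in G) to u and to v, respectively. Then d_G(u,v) = Σ_{B ∈ 𝔅} d_G(u_B, v_B). -/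
open Finset

attribute [local instance] Classical.propDecidable

variable {V : Type*}

/-- A walk inside `H` avoiding `w`. -/
def WalkAvoid (G : SimpleGraph V) (H : G.Subgraph) (w p q : V) : Prop :=
  ∃ W : G.Walk p q, W.toSubgraph ≤ H.deleteVerts {w}

lemma WalkAvoid.symm {G : SimpleGraph V} {H : G.Subgraph} {w p q : V}
    (h : WalkAvoid G H w p q) : WalkAvoid G H w q p := by
  obtain ⟨W, hW⟩ := h
  exact ⟨W.reverse, by rwa [SimpleGraph.Walk.toSubgraph_reverse]⟩

lemma WalkAvoid.trans {G : SimpleGraph V} {H : G.Subgraph} {w p q r : V}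
    (h : WalkAvoid G H w p q) (h2 : WalkAvoid G H w q r) : WalkAvoid G H w p r := by
  obtain ⟨W, hW⟩ := h
  obtain ⟨W', hW'⟩ := h2
  exact ⟨W.append W', by rw [SimpleGraph.Walk.toSubgraph_append]; exact sup_le hW hW'⟩

lemma WalkAvoid.mono {G : SimpleGraph V} {H K : G.Subgraph} {w p q : V}
    (h : WalkAvoid G H w p q) (hHK : H ≤ K) : WalkAvoid G K w p q := by
  obtain ⟨W, hW⟩ := h
  exact ⟨W, hW.trans (SimpleGraph.Subgraph.deleteVerts_mono hHK)⟩

lemma noCut_iff (G : SimpleGraph V) (H : G.Subgraph) :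
    NoCutVertexSub G H ↔ H.Connected ∧ ∀ w, ∀ p ∈ H.verts, ∀ q ∈ H.verts, p ≠ w → q ≠ w →
      WalkAvoid G H w p q := by
  unfold NoCutVertexSub
  refine and_congr_right fun _ => forall_congr' fun w => ?_
  rw [← SimpleGraph.Subgraph.preconnected_iff,
    SimpleGraph.Subgraph.preconnected_iff_forall_exists_walk_subgraph]
  constructor
  · intro h p hp q hq hpw hqw
    exact h ⟨hp, by simpa using hpw⟩ ⟨hq, by simpa using hqw⟩
  · intro h p q hp hq
    exact h p hp.1 q hq.1 (by simpa using hp.2) (by simpa using hq.2)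

lemma noCut_sup {G : SimpleGraph V} {B H : G.Subgraph} (hB : NoCutVertexSub G B)
    (hH : H.Connected) (hne : (B.verts ∩ H.verts).Nonempty)
    (h : ∀ w, ∀ p ∈ H.verts, p ≠ w → ∃ q ∈ B.verts, q ≠ w ∧ WalkAvoid G H w p q) :
    NoCutVertexSub G (B ⊔ H) := by
  rw [noCut_iff] at hB ⊢
  refine ⟨SimpleGraph.Subgraph.connected_sup hB.1.preconnected hH.preconnected hne, ?_⟩
  have key : ∀ w, ∀ p ∈ (B ⊔ H).verts, p ≠ w → ∃ q ∈ B.verts, q ≠ w ∧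
      WalkAvoid G (B ⊔ H) w p q := by
    intro w p hp hpw
    rcases hp with hp | hp
    · exact ⟨p, hp, hpw, (hB.2 w p hp p hp hpw hpw).mono le_sup_left⟩
    · obtain ⟨q, hq, hqw, hW⟩ := h w p hp hpw
      exact ⟨q, hq, hqw, hW.mono le_sup_right⟩
  intro w p hp q hq hpw hqw
  obtain ⟨p', hp', hpw', h1⟩ := key w p hp hpw
  obtain ⟨q', hq', hqw', h2⟩ := key w q hq hqw
  exact (h1.trans ((hB.2 w p' hp' q' hq' hpw' hqw').mono le_sup_left)).trans h2.symm

lemma toSubgraph_le_deleteVerts {G : SimpleGraph V} {H : G.Subgraph} {w p q : V}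
    (W : G.Walk p q) (h : W.toSubgraph ≤ H) (hw : w ∉ W.support) :
    W.toSubgraph ≤ H.deleteVerts {w} := by
  constructor
  · intro x hx
    refine ⟨h.1 hx, ?_⟩
    rintro rfl
    exact hw ((SimpleGraph.Walk.mem_verts_toSubgraph W).1 hx)
  · intro x y hxy
    rw [SimpleGraph.Subgraph.deleteVerts_adj]
    have hx := W.toSubgraph.edge_vert hxy
    have hy := W.toSubgraph.edge_vert hxy.symm
    refine ⟨h.1 hx, ?_, h.1 hy, ?_, h.2 hxy⟩
    · rintro rfl
      exact hw ((SimpleGraph.Walk.mem_verts_toSubgraph W).1 hx)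
    · rintro rfl
      exact hw ((SimpleGraph.Walk.mem_verts_toSubgraph W).1 hy)

/-- A path between two distinct vertices of a block stays in the block. -/
lemma block_path {G : SimpleGraph V} {B : G.Subgraph} (hB : IsBlock G B) {x y : V}
    (hx : x ∈ B.verts) (hy : y ∈ B.verts) (hxy : x ≠ y) (P : G.Walk x y) (hP : P.IsPath) :
    P.toSubgraph ≤ B := by
  have hN : NoCutVertexSub G (B ⊔ P.toSubgraph) := by
    refine noCut_sup hB.1 P.toSubgraph_connected ⟨x, hx, by simp⟩ ?_
    intro w p hp hpw
    rw [SimpleGraph.Walk.mem_verts_toSubgraph, hP.mem_support_iff_exists_append] at hp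
    obtain ⟨q, r, hq, hr, rfl⟩ := hp
    rw [SimpleGraph.Walk.toSubgraph_append]
    by_cases hwq : w ∈ q.support
    · have hwr : w ∉ r.support := fun hwr =>
        hP.ne_of_mem_support_of_append hpw.symm hwq hwr rfl
      refine ⟨y, hy, ?_, r, toSubgraph_le_deleteVerts r le_sup_right hwr⟩
      rintro rfl
      exact hwr r.end_mem_support
    · refine ⟨x, hx, ?_, WalkAvoid.symm ⟨q, toSubgraph_le_deleteVerts q le_sup_left hwq⟩⟩
      rintro rfl
      exact hwq q.start_mem_support
  have := hB.2 _ hN le_sup_left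
  rw [this]
  exact le_sup_right

/-- Two blocks sharing an edge coincide. -/
lemma block_unique {G : SimpleGraph V} {B C : G.Subgraph} (hB : IsBlock G B) (hC : IsBlock G C)
    {a b : V} (h : B.Adj a b) (h' : C.Adj a b) : B = C := by
  have hab : a ≠ b := h.ne
  have hN : NoCutVertexSub G (B ⊔ C) := by
    refine noCut_sup hB.1 hC.1.1 ⟨a, B.edge_vert h, C.edge_vert h'⟩ ?_
    intro w p hp hpw
    have hc := ((noCut_iff G C).1 hC.1).2
    by_cases haw : a = w
    · have hbw : b ≠ w := fun hb => hab (haw.trans hb.symm)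
      exact ⟨b, B.edge_vert h.symm, hbw, hc w p hp b (C.edge_vert h'.symm) hpw hbw⟩
    · exact ⟨a, B.edge_vert h, haw, hc w p hp a (C.edge_vert h') hpw haw⟩
  exact (hB.2 _ hN le_sup_left).trans (hC.2 _ hN le_sup_right).symm

/-- Every edge lies in a block. -/
lemma exists_block [Fintype V] {G : SimpleGraph V} {a b : V} (h : G.Adj a b) :
    ∃ B : G.Subgraph, IsBlock G B ∧ B.Adj a b := by
  have hN : NoCutVertexSub G (G.subgraphOfAdj h) := by
    rw [noCut_iff]
    refine ⟨SimpleGraph.Subgraph.subgraphOfAdj_connected h, ?_⟩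
    have key : ∀ w p, p = a ∨ p = b → p ≠ w → WalkAvoid G (G.subgraphOfAdj h) w p p := by
      intro w p hp hpw
      refine ⟨SimpleGraph.Walk.nil, toSubgraph_le_deleteVerts _ ?_ (by simpa using hpw.symm)⟩
      rcases hp with rfl | rfl <;> simp
    have key2 : ∀ w, a ≠ w → b ≠ w → WalkAvoid G (G.subgraphOfAdj h) w a b := by
      intro w haw hbw
      refine ⟨h.toWalk, toSubgraph_le_deleteVerts _ ?_ ?_⟩
      · rw [SimpleGraph.Adj.toSubgraph_toWalk]
      · simp [haw.symm, hbw.symm]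
    intro w p hp q hq hpw hqw
    have hp' : p = a ∨ p = b := by simpa using hp
    have hq' : q = a ∨ q = b := by simpa using hq
    rcases hp' with rfl | rfl <;> rcases hq' with rfl | rfl
    · exact key w _ (Or.inl rfl) hpw
    · exact key2 w hpw hqw
    · exact (key2 w hqw hpw).symm
    · exact key w _ (Or.inr rfl) hpw
  obtain ⟨B, hle, hB⟩ := Set.Finite.exists_le_maximal
    (Set.toFinite {H : G.Subgraph | NoCutVertexSub G H}) hN
  exact ⟨B, ⟨hB.1, fun H hH hBH => le_antisymm hBH (hB.2 hH hBH)⟩, hle.2 (by simp)⟩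

/-- `g` is the gate of `u` in `B`. -/
def IsGate (G : SimpleGraph V) (B : G.Subgraph) (u g : V) : Prop :=
  g ∈ B.verts ∧ (G \ B.spanningCoe).Reachable u g

lemma gate_self {G : SimpleGraph V} {B : G.Subgraph} {u : V} (hu : u ∈ B.verts) :
    IsGate G B u u := ⟨hu, SimpleGraph.Reachable.refl _⟩

lemma gate_step {G : SimpleGraph V} {B : G.Subgraph} {a b g : V} (hab : G.Adj a b)
    (hn : ¬ B.Adj a b) (h : IsGate G B b g) : IsGate G B a g := by
  refine ⟨h.1, SimpleGraph.Reachable.trans (SimpleGraph.Adj.reachable ?_) h.2⟩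
  rw [SimpleGraph.sdiff_adj]
  exact ⟨hab, hn⟩

lemma gate_unique {G : SimpleGraph V} {B : G.Subgraph} (hB : IsBlock G B) {u g g' : V}
    (h : IsGate G B u g) (h' : IsGate G B u g') : g = g' := by
  by_contra hne
  obtain ⟨P, hP⟩ := (h.2.symm.trans h'.2).exists_isPath
  have hle : G \ B.spanningCoe ≤ G := sdiff_le
  have hsub := block_path hB h.1 h'.1 hne (P.mapLe hle) (hP.mapLe hle)
  cases P with
  | nil => exact hne rfl
  | cons hadj P =>
    have h1 : B.Adj _ _ := hsub.2 (SimpleGraph.Walk.toSubgraph_adj_snd _ (by simp))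
    simp at h1
    rw [SimpleGraph.sdiff_adj] at hadj
    exact hadj.2 h1

lemma gate_exists {G : SimpleGraph V} (hG : G.Connected) {B : G.Subgraph} (hB : IsBlock G B)
    (u : V) : ∃ g, IsGate G B u g := by
  obtain ⟨x, hx⟩ := hB.1.1.nonempty
  obtain ⟨W⟩ := hG.preconnected u x
  induction W with
  | nil => exact ⟨_, gate_self hx⟩
  | @cons a b c hab W ih =>
    by_cases h : B.Adj a b
    · exact ⟨a, gate_self (B.edge_vert h)⟩
    · obtain ⟨g, hg⟩ := ih hx
      exact ⟨g, gate_step hab h hg⟩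

lemma gate_walk {G : SimpleGraph V} (hG : G.Connected) {B : G.Subgraph} (hB : IsBlock G B)
    {u x g : V} (hx : x ∈ B.verts) (W : G.Walk u x) (hg : IsGate G B u g) :
    G.dist u g + G.dist g x ≤ W.length := by
  induction W with
  | nil =>
    obtain rfl := gate_unique hB hg (gate_self hx)
    simp
  | @cons a b c hab W ih =>
    by_cases h : B.Adj a b
    · obtain rfl := gate_unique hB hg (gate_self (B.edge_vert h))
      simpa using SimpleGraph.dist_le (SimpleGraph.Walk.cons hab W)
    · have h1 := ih hx (gate_step hab.symm (fun h' => h h'.symm) hg)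
      have h2 : G.dist a g ≤ G.dist a b + G.dist b g := hG.dist_triangle
      have h3 : G.dist a b = 1 := SimpleGraph.dist_eq_one_iff_adj.2 hab
      rw [SimpleGraph.Walk.length_cons]
      omega

lemma gate_dist {G : SimpleGraph V} (hG : G.Connected) {B : G.Subgraph} (hB : IsBlock G B)
    {u x g : V} (hx : x ∈ B.verts) (hg : IsGate G B u g) :
    G.dist u x = G.dist u g + G.dist g x := by
  obtain ⟨W, hW⟩ := hG.exists_walk_length_eq_dist u x
  refine le_antisymm hG.dist_triangle ?_
  rw [← hW]
  exact gate_walk hG hB hx W hg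

lemma gate_of_nearest {G : SimpleGraph V} (hG : G.Connected) {B : G.Subgraph} (hB : IsBlock G B)
    {u n : V} (hn : n ∈ B.verts) (hmin : ∀ x ∈ B.verts, G.dist u n ≤ G.dist u x) :
    IsGate G B u n := by
  obtain ⟨g, hg⟩ := gate_exists hG hB u
  have h1 := gate_dist hG hB hn hg
  have h2 := hmin g hg.1
  have h3 : G.dist g n = 0 := by omega
  rw [(hG.dist_eq_zero_iff).1 h3] at hg
  exact hg

lemma dist_eq_sum_gates [Fintype V] (G : SimpleGraph V) (hG : G.Connected) (u : V)
    (𝔅 : Finset G.Subgraph) (h𝔅 : ∀ B : G.Subgraph, B ∈ 𝔅 ↔ IsBlock G B)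
    (uB : G.Subgraph → V) (huB : ∀ B ∈ 𝔅, IsGate G B u (uB B)) (n : ℕ) :
    ∀ (v : V) (vB : G.Subgraph → V), (∀ B ∈ 𝔅, IsGate G B v (vB B)) → G.dist u v = n →
      G.dist u v = ∑ B ∈ 𝔅, G.dist (uB B) (vB B) := by
  induction n with
  | zero =>
    intro v vB hvB h0
    obtain rfl := (hG.dist_eq_zero_iff).1 h0
    rw [h0]
    symm
    refine Finset.sum_eq_zero fun B hB => ?_
    rw [gate_unique ((h𝔅 B).1 hB) (huB B hB) (hvB B hB), SimpleGraph.dist_self]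
  | succ n ih =>
    intro v vB hvB hn
    obtain ⟨v', hadj, hv'⟩ : ∃ v', G.Adj v' v ∧ G.dist u v' = n := by
      obtain ⟨W, hW⟩ := hG.exists_walk_length_eq_dist v u
      rw [SimpleGraph.dist_comm, hn] at hW
      cases W with
      | nil => simp at hW
      | @cons _ b _ hvb W =>
        refine ⟨b, hvb.symm, ?_⟩
        have h1 := SimpleGraph.dist_le W
        have h2 : G.dist u v ≤ G.dist u b + G.dist b v := hG.dist_triangle
        have h3 : G.dist b v = 1 := SimpleGraph.dist_eq_one_iff_adj.2 hvb.symm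
        rw [SimpleGraph.dist_comm] at h1
        rw [SimpleGraph.Walk.length_cons] at hW
        omega
    obtain ⟨C, hC, hCadj⟩ := exists_block hadj
    have hCm := (h𝔅 C).2 hC
    have hex : ∀ B : G.Subgraph, ∃ g, B ∈ 𝔅 → IsGate G B v' g := by
      intro B
      by_cases hB : B ∈ 𝔅
      · obtain ⟨g, hg⟩ := gate_exists hG ((h𝔅 B).1 hB) v'
        exact ⟨g, fun _ => hg⟩
      · exact ⟨v', fun h => absurd h hB⟩
    choose wB hwB using hex
    have hI := ih v' wB hwB hv'
    rw [← Finset.add_sum_erase _ _ hCm] at hI ⊢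
    have hrest : ∑ B ∈ 𝔅.erase C, G.dist (uB B) (vB B) =
        ∑ B ∈ 𝔅.erase C, G.dist (uB B) (wB B) := by
      refine Finset.sum_congr rfl fun B hB => ?_
      obtain ⟨hne, hB⟩ := Finset.mem_erase.1 hB
      have hb := (h𝔅 B).1 hB
      have hnadj : ¬ B.Adj v' v := fun h => hne (block_unique hb hC h hCadj)
      rw [gate_unique hb (hwB B hB) (gate_step hadj hnadj (hvB B hB))]
    rw [hrest]
    have e1 : vB C = v := gate_unique hC (hvB C hCm) (gate_self (C.edge_vert hCadj.symm))
    have e2 : wB C = v' := gate_unique hC (hwB C hCm) (gate_self (C.edge_vert hCadj))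
    have d1 := gate_dist hG hC (C.edge_vert hCadj.symm) (huB C hCm)
    have d2 := gate_dist hG hC (C.edge_vert hCadj) (huB C hCm)
    rw [e1]
    rw [e2] at hI
    omega

/-- **Proposition (distance partition over blocks).**
For vertices `u, v` of a finite simple connected graph `G` with set of blocks `𝔅`, where
`uB B` and `vB B` denote the vertices of the block `B` closest in `G` to `u` and to `v`
respectively, `d_G(u,v) = Σ_{B ∈ 𝔅} d_G(u_B, v_B)`. -/
theorem dist_eq_sum_blocks [Fintype V] (G : SimpleGraph V) (hG : G.Connected) (u v : V)
    (𝔅 : Finset G.Subgraph) (h𝔅 : ∀ B : G.Subgraph, B ∈ 𝔅 ↔ IsBlock G B)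
    (uB vB : G.Subgraph → V)
    (huB : ∀ B ∈ 𝔅, uB B ∈ B.verts ∧ ∀ x ∈ B.verts, G.dist u (uB B) ≤ G.dist u x)
    (hvB : ∀ B ∈ 𝔅, vB B ∈ B.verts ∧ ∀ x ∈ B.verts, G.dist v (vB B) ≤ G.dist v x) :
    G.dist u v = ∑ B ∈ 𝔅, G.dist (uB B) (vB B) := by
  exact dist_eq_sum_gates G hG u 𝔅 h𝔅 uB
    (fun B hB => gate_of_nearest hG ((h𝔅 B).1 hB) (huB B hB).1 (huB B hB).2) _ v vB
    (fun B hB => gate_of_nearest hG ((h𝔅 B).1 hB) (hvB B hB).1 (hvB B hB).2) rfl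
end

section
/- Let G be a finite simple connected graph. Then Σ_{{s,t} ∈ E(G)} o_G(s,t)² = Σ_{(u,v) ∈ V(G)×V(G)} deq_G(u,v), where the right-hand sum is over all ordered pairs of vertices. -/
open Finset

attribute [local instance] Classical.propDecidable

variable {V : Type*}

/-- **Lemma.** For a finite simple connected graph `G`,
`Σ_{{s,t} ∈ E(G)} o_G(s,t)² = Σ_{(u,v) ∈ V(G)×V(G)} deq_G(u,v)`. -/
theorem sum_equidist_sq_eq_sum_deq [Fintype V] (G : SimpleGraph V) (hG : G.Connected) :
    ∑ e ∈ G.edgeFinset, (equidistSym2 G e) ^ 2 = ∑ u : V, ∑ v : V, deqCount G u v := by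
  have key : ∀ e : Sym2 V, (equidistSym2 G e) ^ 2 =
      ∑ u : V, ∑ v : V, if IsDistEqual G u v e then 1 else 0 := by
    intro e
    induction e using Sym2.ind with
    | _ s t =>
      have h1 : equidistSym2 G s(s, t) =
          ∑ w : V, if G.dist w s = G.dist w t then 1 else 0 := by
        change (Finset.univ.filter fun w => G.dist w s = G.dist w t).card = _
        rw [Finset.card_filter]
      rw [h1, sq, Finset.sum_mul_sum]
      refine Finset.sum_congr rfl fun u _ => Finset.sum_congr rfl fun v _ => ?_
      have h2 : IsDistEqual G u v s(s, t) ↔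
          (G.dist u s = G.dist u t ∧ G.dist v s = G.dist v t) := Iff.rfl
      by_cases hu : G.dist u s = G.dist u t <;> by_cases hv : G.dist v s = G.dist v t <;>
        simp [h2, hu, hv]
  rw [Finset.sum_congr rfl fun e _ => key e, Finset.sum_comm]
  refine Finset.sum_congr rfl fun u _ => ?_
  rw [Finset.sum_comm]
  refine Finset.sum_congr rfl fun v _ => ?_
  unfold deqCount
  rw [Finset.card_filter]
end

section
/- Let G be a cactus graph. Then Sz(G) ≤ 2·W(G). -/
open Finset

attribute [local instance] Classical.propDecidable

variable {V : Type*}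

namespace SzegedAux

/-- Summing a function vanishing on the diagonal over ordered pairs counts unordered pairs twice. -/
lemma sum_pairs [Fintype V] (f : Sym2 V → ℕ) (hf : ∀ a, f s(a, a) = 0) :
    ∑ u : V, ∑ v : V, f s(u, v) = 2 * ∑ p : Sym2 V, f p := by
  rw [← Finset.sum_product', Finset.mul_sum,
    ← Finset.sum_fiberwise (Finset.univ ×ˢ Finset.univ : Finset (V × V))
      (fun x => s(x.1, x.2)) (fun x => f s(x.1, x.2))]
  refine Finset.sum_congr rfl fun p _ => ?_
  have h1 : ∀ x ∈ (Finset.univ ×ˢ Finset.univ : Finset (V × V)).filter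
      (fun x => s(x.1, x.2) = p), f s(x.1, x.2) = f p := by
    intro x hx
    rw [(Finset.mem_filter.1 hx).2]
  rw [Finset.sum_congr rfl h1, Finset.sum_const, smul_eq_mul]
  induction p using Sym2.ind with
  | _ a b =>
    by_cases hab : a = b
    · subst hab; simp [hf]
    · congr 1
      have : (Finset.univ ×ˢ Finset.univ : Finset (V × V)).filter
          (fun x => s(x.1, x.2) = s(a, b)) = {(a, b), (b, a)} := by
        ext ⟨x, y⟩
        simp [Sym2.eq_iff]
      rw [this, Finset.card_pair]
      intro h
      exact hab (Prod.ext_iff.1 h).1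

lemma reach_of_walk {G : SimpleGraph V} {K : G.Subgraph} {a b : V} (r : G.Walk a b)
    (h : r.toSubgraph ≤ K) (ha : a ∈ K.verts) (hb : b ∈ K.verts) :
    K.coe.Reachable ⟨a, ha⟩ ⟨b, hb⟩ := by
  have h1 := r.toSubgraph_connected.preconnected
    ⟨a, r.start_mem_verts_toSubgraph⟩ ⟨b, r.end_mem_verts_toSubgraph⟩
  exact h1.map (SimpleGraph.Subgraph.inclusion h)

lemma le_delete {G : SimpleGraph V} {H : G.Subgraph} {a b x : V} (r : G.Walk a b)
    (h : r.toSubgraph ≤ H) (hx : x ∉ r.support) : r.toSubgraph ≤ H.deleteVerts {x} := by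
  constructor
  · intro y hy
    refine ⟨h.1 hy, ?_⟩
    rintro rfl
    exact hx (by simpa using hy)
  · intro y z hyz
    have hy : y ∈ r.support := by simpa using r.toSubgraph.edge_vert hyz
    have hz : z ∈ r.support := by simpa using r.toSubgraph.edge_vert hyz.symm
    rw [SimpleGraph.Subgraph.deleteVerts_adj]
    refine ⟨h.1 (r.toSubgraph.edge_vert hyz), ?_, h.1 (r.toSubgraph.edge_vert hyz.symm), ?_,
      h.2 hyz⟩
    · rintro rfl; exact hx hy
    · rintro rfl; exact hx hz

/-- Every vertex of a path survives connected to one of the ends. -/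
lemma reach_end {G : SimpleGraph V} {H : G.Subgraph} {u w x y : V} (p : G.Walk u w)
    (hp : p.IsPath) (h : p.toSubgraph ≤ H) (hy : y ∈ p.support)
    (hyK : y ∈ (H.deleteVerts {x}).verts) :
    (∃ hu : u ∈ (H.deleteVerts {x}).verts, (H.deleteVerts {x}).coe.Reachable ⟨y, hyK⟩ ⟨u, hu⟩) ∨
    (∃ hw : w ∈ (H.deleteVerts {x}).verts,
      (H.deleteVerts {x}).coe.Reachable ⟨y, hyK⟩ ⟨w, hw⟩) := by
  have hspec := p.take_spec hy
  have hyx : y ≠ x := hyK.2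
  have hle : (p.takeUntil y hy).toSubgraph ⊔ (p.dropUntil y hy).toSubgraph ≤ H := by
    rw [← SimpleGraph.Walk.toSubgraph_append, hspec]; exact h
  by_cases h1 : x ∈ (p.takeUntil y hy).support
  · by_cases h2 : x ∈ (p.dropUntil y hy).support
    · exfalso
      rw [← hspec] at hp
      have hn := hp.support_nodup
      rw [SimpleGraph.Walk.support_append] at hn
      have h3 : x ∈ (p.dropUntil y hy).support.tail := by
        rw [SimpleGraph.Walk.mem_support_iff] at h2
        rcases h2 with h2 | h2
        · exact absurd h2.symm hyx
        · exact h2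
      exact (List.disjoint_of_nodup_append hn) h1 h3
    · right
      have hK := le_delete _ (le_sup_right.trans hle) h2
      have hw : w ∈ (H.deleteVerts {x}).verts :=
        hK.1 (SimpleGraph.Walk.end_mem_verts_toSubgraph _)
      exact ⟨hw, reach_of_walk _ hK hyK hw⟩
  · left
    have hK := le_delete _ (le_sup_left.trans hle) h1
    have hu : u ∈ (H.deleteVerts {x}).verts :=
      hK.1 (SimpleGraph.Walk.start_mem_verts_toSubgraph _)
    exact ⟨hu, (reach_of_walk _ hK hu hyK).symm⟩

/-- The union of an edge and two paths between its ends has no cut vertex. -/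
lemma noCut_union {G : SimpleGraph V} {u w : V} (p q e : G.Walk u w) (hp : p.IsPath)
    (hq : q.IsPath) (he : e.support = [u, w]) (hep : e.IsPath) :
    NoCutVertexSub G (p.toSubgraph ⊔ q.toSubgraph ⊔ e.toSubgraph) := by
  constructor
  · refine SimpleGraph.Subgraph.connected_sup
      (SimpleGraph.Subgraph.connected_sup p.toSubgraph_connected.preconnected
        q.toSubgraph_connected.preconnected
        ⟨u, p.start_mem_verts_toSubgraph, q.start_mem_verts_toSubgraph⟩).preconnected
      e.toSubgraph_connected.preconnected
      ⟨u, Or.inl p.start_mem_verts_toSubgraph, e.start_mem_verts_toSubgraph⟩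
  · intro x
    set H := p.toSubgraph ⊔ q.toSubgraph ⊔ e.toSubgraph with hH
    have hpH : p.toSubgraph ≤ H := le_sup_left.trans le_sup_left
    have hqH : q.toSubgraph ≤ H := le_sup_right.trans le_sup_left
    have heH : e.toSubgraph ≤ H := le_sup_right
    have key : ∀ y : (H.deleteVerts {x}).verts,
        (∃ hu : u ∈ (H.deleteVerts {x}).verts, (H.deleteVerts {x}).coe.Reachable y ⟨u, hu⟩) ∨
        (∃ hw : w ∈ (H.deleteVerts {x}).verts,
          (H.deleteVerts {x}).coe.Reachable y ⟨w, hw⟩) := by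
      rintro ⟨y, hy⟩
      have hy1 : y ∈ H.verts := hy.1
      rcases hy1 with (h1 | h1) | h1
      · exact reach_end p hp hpH (by simpa using h1) hy
      · exact reach_end q hq hqH (by simpa using h1) hy
      · exact reach_end e hep heH (by simpa using h1) hy
    have huw : ∀ (hu : u ∈ (H.deleteVerts {x}).verts) (hw : w ∈ (H.deleteVerts {x}).verts),
        (H.deleteVerts {x}).coe.Reachable ⟨u, hu⟩ ⟨w, hw⟩ := by
      intro hu hw
      refine reach_of_walk e (le_delete e heH ?_) hu hw
      rw [he]
      intro hx
      have h1 : u ≠ x := hu.2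
      have h2 : w ≠ x := hw.2
      simp at hx
      rcases hx with rfl | rfl <;> contradiction
    intro y z
    rcases key y with ⟨hu, h1⟩ | ⟨hw, h1⟩ <;> rcases key z with ⟨hu', h2⟩ | ⟨hw', h2⟩
    · exact h1.trans h2.symm
    · exact (h1.trans (huw hu hw')).trans h2.symm
    · exact (h1.trans (huw hu' hw).symm).trans h2.symm
    · exact h1.trans h2.symm

/-- Cycles have no three distinct neighbours at a vertex. -/
lemma cycleGraph_three {n : ℕ} (hn : 3 ≤ n) {v a b c : Fin n}
    (ha : (SimpleGraph.cycleGraph n).Adj v a) (hb : (SimpleGraph.cycleGraph n).Adj v b)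
    (hc : (SimpleGraph.cycleGraph n).Adj v c) : a = b ∨ a = c ∨ b = c := by
  obtain ⟨m, rfl⟩ : ∃ m, n = m + 2 := ⟨n - 2, by omega⟩
  rw [SimpleGraph.cycleGraph_adj] at ha hb hc
  have aux : ∀ {x : Fin (m + 2)}, v - x = 1 ∨ x - v = 1 → x = v - 1 ∨ x = v + 1 := by
    intro x hx
    rcases hx with h | h
    · left; rw [← h]; abel
    · right; rw [← h]; abel
  rcases aux ha with rfl | rfl <;> rcases aux hb with rfl | rfl <;>
    rcases aux hc with rfl | rfl <;> simp

lemma block_three {G : SimpleGraph V} {B : G.Subgraph}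
    (hB : IsEdgeBlock G B ∨ IsCycleBlock G B) {v a b c : V}
    (ha : B.Adj v a) (hb : B.Adj v b) (hc : B.Adj v c) : a = b ∨ a = c ∨ b = c := by
  rcases hB with ⟨x, y, h, rfl⟩ | ⟨n, hn, ⟨φ⟩⟩
  · simp only [SimpleGraph.subgraphOfAdj_adj, Sym2.eq_iff] at ha hb hc
    grind
  · have hv := B.edge_vert ha
    have ha' := B.edge_vert ha.symm
    have hb' := B.edge_vert hb.symm
    have hc' := B.edge_vert hc.symm
    have e1 : B.coe.Adj ⟨v, hv⟩ ⟨a, ha'⟩ := ha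
    have e2 : B.coe.Adj ⟨v, hv⟩ ⟨b, hb'⟩ := hb
    have e3 : B.coe.Adj ⟨v, hv⟩ ⟨c, hc'⟩ := hc
    have := cycleGraph_three hn (φ.map_adj_iff.2 e1) (φ.map_adj_iff.2 e2) (φ.map_adj_iff.2 e3)
    simpa using this

/-- In a subgraph of maximum degree two, a path is determined by its avoiding one neighbour. -/
lemma path_unique {G : SimpleGraph V} {B : G.Subgraph}
    (hB : ∀ v a b c, B.Adj v a → B.Adj v b → B.Adj v c → a = b ∨ a = c ∨ b = c)
    {y w : V} (p : G.Walk y w) : ∀ (q : G.Walk y w) (x : V), B.Adj y x → p.IsPath → q.IsPath →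
    p.toSubgraph ≤ B → q.toSubgraph ≤ B → p.snd ≠ x → q.snd ≠ x → p = q := by
  induction p with
  | nil =>
    intro q x _ _ hq _ _ _ _
    exact (SimpleGraph.Walk.isPath_iff_nil.1 hq).eq_nil.symm
  | @cons a b c h p ih =>
    intro q x hx hp hq hpB hqB h1 h2
    cases q with
    | nil => exact absurd (SimpleGraph.Walk.isPath_iff_nil.1 hp) (by simp)
    | @cons _ b' _ h' q =>
      simp only [SimpleGraph.Walk.snd_cons] at h1 h2
      simp only [SimpleGraph.Walk.toSubgraph, sup_le_iff] at hpB hqB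
      have e1 : B.Adj a b := hpB.1.2 (by simp)
      have e2 : B.Adj a b' := hqB.1.2 (by simp)
      have hbb : b = b' := by
        rcases hB _ _ _ _ e1 e2 hx with h | h | h
        · exact h
        · exact absurd h h1
        · exact absurd h h2
      subst hbb
      rw [SimpleGraph.Walk.cons_isPath_iff] at hp hq
      have := ih q a e1.symm hp.1 hq.1 hpB.2 hqB.2 ?_ ?_
      · rw [this]
      · intro hh; exact hp.2 (hh ▸ p.getVert_mem_support 1)
      · intro hh; exact hq.2 (hh ▸ q.getVert_mem_support 1)

/-- In a cactus, there is at most one path joining the ends of an edge apart from that edge. -/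
lemma cactus_path_unique [Fintype V] {G : SimpleGraph V} (hG : IsCactus G) {u w : V}
    (h : G.Adj u w) (p q : G.Walk u w) (hp : p.IsPath) (hq : q.IsPath)
    (hp1 : p.snd ≠ w) (hq1 : q.snd ≠ w) : p = q := by
  have hN := noCut_union p q h.toWalk hp hq (by simp [SimpleGraph.Adj.toWalk])
    (by simp [SimpleGraph.Adj.toWalk, h.ne])
  have hfin : {H : G.Subgraph | NoCutVertexSub G H}.Finite := Set.toFinite _
  obtain ⟨B, hle, hmax⟩ := hfin.exists_le_maximal hN
  have hB : IsBlock G B := ⟨hmax.1, fun H hH hBH => le_antisymm hBH (hmax.2 hH hBH)⟩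
  have h3 := hG.2 B hB
  refine path_unique (B := B) (fun v a b c ha hb hc => block_three h3 ha hb hc) p q w ?_ hp hq
    ((le_sup_left.trans le_sup_left).trans hle) ((le_sup_right.trans le_sup_left).trans hle)
    hp1 hq1
  refine hle.2 (Or.inr ?_)
  simp [SimpleGraph.Adj.toWalk]

/-- Oriented edges pointing away from `u` but not from `w`. -/
def Flip (G : SimpleGraph V) (u w s t : V) : Prop :=
  G.Adj s t ∧ G.dist u s < G.dist u t ∧ G.dist w t ≤ G.dist w s

lemma flip_path {G : SimpleGraph V} (hG : G.Connected) {u w s t : V} (h : G.Adj u w)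
    (hF : Flip G u w s t) (hne : (s, t) ≠ (u, w)) :
    ∃ p : G.Walk u w, p.IsPath ∧ p.snd ≠ w ∧ p.length = G.dist u s + 1 + G.dist w t ∧
      p.getVert (G.dist u s) = s ∧ p.getVert (G.dist u s + 1) = t := by
  obtain ⟨hst, h1, h2⟩ := hF
  obtain ⟨P, hP, hPl⟩ := hG.exists_path_of_dist u s
  obtain ⟨Q, hQ, hQl⟩ := hG.exists_path_of_dist t w
  rw [SimpleGraph.dist_comm] at hQl
  have hdisj : ∀ x ∈ P.support, x ∉ Q.support := by
    intro x hx hx'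
    have a1 : P.length = (P.takeUntil x hx).length + (P.dropUntil x hx).length := by
      rw [← SimpleGraph.Walk.length_append, P.take_spec hx]
    have a2 : Q.length = (Q.takeUntil x hx').length + (Q.dropUntil x hx').length := by
      rw [← SimpleGraph.Walk.length_append, Q.take_spec hx']
    have b1 := SimpleGraph.dist_le
      ((P.takeUntil x hx).append (Q.takeUntil x hx').reverse)
    have b2 := SimpleGraph.dist_le
      ((Q.dropUntil x hx').reverse.append (P.dropUntil x hx))
    simp only [SimpleGraph.Walk.length_append, SimpleGraph.Walk.length_reverse] at b1 b2
    omega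
  have hpath : (P.append (SimpleGraph.Walk.cons hst Q)).IsPath := by
    rw [SimpleGraph.Walk.isPath_def, SimpleGraph.Walk.support_append,
      SimpleGraph.Walk.support_cons, List.tail_cons, List.nodup_append]
    refine ⟨hP.support_nodup, hQ.support_nodup, ?_⟩
    rintro a ha b hb rfl
    exact hdisj a ha hb
  have hl : (P.append (SimpleGraph.Walk.cons hst Q)).length = G.dist u s + 1 + G.dist w t := by
    simp only [SimpleGraph.Walk.length_append, SimpleGraph.Walk.length_cons]; omega
  have g1 : (P.append (SimpleGraph.Walk.cons hst Q)).getVert (G.dist u s) = s := by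
    rw [SimpleGraph.Walk.getVert_append]; simp [hPl]
  have g2 : (P.append (SimpleGraph.Walk.cons hst Q)).getVert (G.dist u s + 1) = t := by
    rw [SimpleGraph.Walk.getVert_append]; simp [hPl]
  refine ⟨P.append (SimpleGraph.Walk.cons hst Q), hpath, ?_, hl, g1, g2⟩
  intro hs
  have hlast := (P.append (SimpleGraph.Walk.cons hst Q)).getVert_length
  have hinj := hpath.getVert_injOn (x₁ := 1)
    (x₂ := (P.append (SimpleGraph.Walk.cons hst Q)).length) (by show 1 ≤ _; omega)
    (le_refl (P.append (SimpleGraph.Walk.cons hst Q)).length) (by rw [hlast]; exact hs)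
  have c1 : G.dist u s = 0 := by omega
  have c2 : G.dist w t = 0 := by omega
  apply hne
  rw [(hG.dist_eq_zero_iff).1 c1, (hG.dist_eq_zero_iff).1 c2]

lemma flip_unique [Fintype V] {G : SimpleGraph V} (hG : IsCactus G) {u w s t s' t' : V}
    (h : G.Adj u w) (hF : Flip G u w s t) (hne : (s, t) ≠ (u, w))
    (hF' : Flip G u w s' t') (hne' : (s', t') ≠ (u, w)) : (s, t) = (s', t') := by
  obtain ⟨p, hp, hp1, hl, g1, g2⟩ := flip_path hG.1 h hF hne
  obtain ⟨q, hq, hq1, hl', g1', g2'⟩ := flip_path hG.1 h hF' hne'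
  have := cactus_path_unique hG h p q hp hq hp1 hq1
  subst this
  obtain ⟨-, b1, b2⟩ := hF
  obtain ⟨-, b1', b2'⟩ := hF'
  have d1 : G.dist u w = 1 := SimpleGraph.dist_eq_one_iff_adj.2 h
  have d2 : G.dist w u = 1 := SimpleGraph.dist_eq_one_iff_adj.2 h.symm
  have t1 := hG.1.dist_triangle (u := w) (v := u) (w := s)
  have t2 := hG.1.dist_triangle (u := u) (v := w) (w := t)
  have t1' := hG.1.dist_triangle (u := w) (v := u) (w := s')
  have t2' := hG.1.dist_triangle (u := u) (v := w) (w := t')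
  have : G.dist u s = G.dist u s' := by omega
  rw [← this] at g1' g2'
  rw [← g1, ← g2, ← g1', ← g2']

lemma flip_card [Fintype V] {G : SimpleGraph V} (hG : IsCactus G) {u w : V} (h : G.Adj u w) :
    (Finset.univ.filter fun x : V × V => Flip G u w x.1 x.2).card ≤ 2 := by
  have h1 : ((Finset.univ.filter fun x : V × V => Flip G u w x.1 x.2).erase (u, w)).card ≤ 1 := by
    rw [Finset.card_le_one]
    rintro ⟨s, t⟩ ha ⟨s', t'⟩ hb
    simp only [Finset.mem_erase, Finset.mem_filter, Finset.mem_univ, true_and] at ha hb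
    exact flip_unique hG h ha.2 ha.1 hb.2 hb.1
  have h2 := Finset.pred_card_le_card_erase
    (s := Finset.univ.filter fun x : V × V => Flip G u w x.1 x.2) (a := (u, w))
  omega

/-- Oriented disparate edges. -/
noncomputable def D [Fintype V] (G : SimpleGraph V) (u v : V) : Finset (V × V) :=
  Finset.univ.filter fun x : V × V =>
    G.Adj x.1 x.2 ∧ G.dist u x.1 < G.dist u x.2 ∧ G.dist v x.2 < G.dist v x.1

lemma D_card_walk [Fintype V] {G : SimpleGraph V} (hG : IsCactus G) {u v : V} (p : G.Walk u v) :
    (D G u v).card ≤ 2 * p.length := by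
  induction p with
  | nil =>
    rw [Finset.card_eq_zero.2]
    · simp
    · ext x
      simp only [D, Finset.mem_filter, Finset.mem_univ, true_and, Finset.notMem_empty, iff_false]
      omega
  | @cons a b c h p ih =>
    have hsub : D G a c ⊆ (Finset.univ.filter fun x : V × V => Flip G a b x.1 x.2) ∪ D G b c := by
      intro x hx
      rw [Finset.mem_union]
      simp only [D, Finset.mem_filter, Finset.mem_univ, true_and] at hx ⊢
      rcases Nat.lt_or_ge (G.dist b x.1) (G.dist b x.2) with h' | h'
      · exact Or.inr ⟨hx.1, h', hx.2.2⟩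
      · exact Or.inl ⟨hx.1, hx.2.1, h'⟩
    have := (Finset.card_le_card hsub).trans (Finset.card_union_le _ _)
    have := flip_card hG h
    rw [SimpleGraph.Walk.length_cons]
    omega

lemma D_card [Fintype V] {G : SimpleGraph V} (hG : IsCactus G) (u v : V) :
    (D G u v).card ≤ 2 * G.dist u v := by
  obtain ⟨p, hp⟩ := hG.1.exists_walk_length_eq_dist u v
  rw [← hp]
  exact D_card_walk hG p

lemma sum_swap [Fintype V] (F : V → V → V → V → ℕ) :
    ∑ s, ∑ t, ∑ u, ∑ v, F s t u v = ∑ u, ∑ v, ∑ s, ∑ t, F s t u v := by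
  calc ∑ s, ∑ t, ∑ u, ∑ v, F s t u v = ∑ s, ∑ u, ∑ t, ∑ v, F s t u v :=
        Finset.sum_congr rfl fun _ _ => Finset.sum_comm
    _ = ∑ u, ∑ s, ∑ t, ∑ v, F s t u v := Finset.sum_comm
    _ = ∑ u, ∑ s, ∑ v, ∑ t, F s t u v :=
        Finset.sum_congr rfl fun _ _ => Finset.sum_congr rfl fun _ _ => Finset.sum_comm
    _ = ∑ u, ∑ v, ∑ s, ∑ t, F s t u v := Finset.sum_congr rfl fun _ _ => Finset.sum_comm

lemma two_szeged [Fintype V] (G : SimpleGraph V) :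
    2 * szeged G = ∑ u : V, ∑ v : V, (D G u v).card := by
  have h1 : szeged G = ∑ p : Sym2 V, if p ∈ G.edgeFinset then
    Sym2.lift ⟨fun s t => closerCount G s t * closerCount G t s,
      fun _ _ => Nat.mul_comm _ _⟩ p else 0 := by
    rw [szeged, Finset.sum_ite_mem, Finset.univ_inter]
  rw [h1, ← sum_pairs _ (by simp)]
  have h2 : ∀ s t : V, (if s(s, t) ∈ G.edgeFinset then
    Sym2.lift ⟨fun s t => closerCount G s t * closerCount G t s,
      fun _ _ => Nat.mul_comm _ _⟩ s(s, t) else 0) =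
      ∑ u : V, ∑ v : V, if G.Adj s t ∧ G.dist u s < G.dist u t ∧ G.dist v t < G.dist v s
        then 1 else 0 := by
    intro s t
    by_cases h : G.Adj s t
    · simp only [SimpleGraph.mem_edgeFinset, SimpleGraph.mem_edgeSet, h, if_true, Sym2.lift_mk,
        true_and, closerCount, Finset.card_filter, Finset.sum_mul_sum]
      refine Finset.sum_congr rfl fun u _ => Finset.sum_congr rfl fun v _ => ?_
      by_cases a : G.dist u s < G.dist u t <;> by_cases b : G.dist v t < G.dist v s <;> simp [a, b]
    · simp [h]
  simp_rw [h2, D, Finset.card_filter, Fintype.sum_prod_type]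
  exact sum_swap _

end SzegedAux

/-- **Theorem.** For a cactus graph `G`, `Sz(G) ≤ 2·W(G)`. -/
theorem szeged_le_two_wiener [Fintype V] (G : SimpleGraph V) (hG : IsCactus G) :
    szeged G ≤ 2 * wiener G := by
  have h1 := SzegedAux.two_szeged G
  have h2 : ∑ u : V, ∑ v : V, (SzegedAux.D G u v).card ≤ ∑ u : V, ∑ v : V, 2 * G.dist u v :=
    Finset.sum_le_sum fun u _ => Finset.sum_le_sum fun v _ => SzegedAux.D_card hG u v
  have h3 := SzegedAux.sum_pairs
    (Sym2.lift ⟨fun u v => G.dist u v, fun _ _ => G.dist_comm⟩) (by simp)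
  simp only [Sym2.lift_mk] at h3
  have h4 : ∑ u : V, ∑ v : V, 2 * G.dist u v = 2 * (2 * wiener G) := by
    rw [wiener, ← h3]
    simp_rw [← Finset.mul_sum]
  omega
end

section
/- Let G be a cactus graph. Then Sz(G) = 2·W(G) if and only if every block of G is a cycle of even length. -/
open Finset

attribute [local instance] Classical.propDecidable

variable {V : Type*}

namespace CactusSz

open SimpleGraph

/-- Connectivity inside `H` avoiding `X`. -/
def Av {G : SimpleGraph V} (H : G.Subgraph) (X : Set V) : V → V → Prop :=
  Relation.ReflTransGen fun a b => H.Adj a b ∧ a ∉ X ∧ b ∉ X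

lemma Av.symm {G : SimpleGraph V} {H : G.Subgraph} {X : Set V} {a b : V} (h : Av H X a b) :
    Av H X b a := by
  unfold Av at *
  induction h with
  | refl => exact .refl
  | tail _ h ih => exact .head ⟨h.1.symm, h.2.2, h.2.1⟩ ih

lemma Av.trans {G : SimpleGraph V} {H : G.Subgraph} {X : Set V} {a b c : V} (h : Av H X a b)
    (h' : Av H X b c) : Av H X a c := Relation.ReflTransGen.trans h h'

lemma Av.mono {G : SimpleGraph V} {H H' : G.Subgraph} {X : Set V} {a b : V} (h : Av H X a b)
    (hle : H ≤ H') : Av H' X a b :=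
  Relation.ReflTransGen.mono (fun _ _ h => ⟨hle.2 h.1, h.2⟩) _ _ h

lemma preconn_iff {G : SimpleGraph V} (H : G.Subgraph) (X : Set V) :
    (H.deleteVerts X).coe.Preconnected ↔
      ∀ a b, a ∈ H.verts → b ∈ H.verts → a ∉ X → b ∉ X → Av H X a b := by
  constructor
  · intro h a b ha hb hax hbx
    have h1 := h ⟨a, ha, hax⟩ ⟨b, hb, hbx⟩
    rw [SimpleGraph.reachable_iff_reflTransGen] at h1
    refine Relation.ReflTransGen.lift (fun x : (H.deleteVerts X).verts => x.1) ?_ _ _ h1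
    intro x y hxy
    have := hxy
    simp only [Subgraph.coe_adj, Subgraph.deleteVerts_adj] at this
    tauto
  · intro h a b
    have h1 := h a.1 b.1 a.2.1 b.2.1 a.2.2 b.2.2
    rw [SimpleGraph.reachable_iff_reflTransGen]
    obtain ⟨a, ha⟩ := a
    obtain ⟨b, hb⟩ := b
    simp only at h1
    unfold Av at h1
    induction h1 with
    | refl => exact .refl
    | @tail c d _ hcd ih =>
      have hc : c ∈ (H.deleteVerts X).verts := ⟨H.edge_vert hcd.1, hcd.2.1⟩
      refine Relation.ReflTransGen.tail (ih hc) ?_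
      simp only [Subgraph.coe_adj, Subgraph.deleteVerts_adj]
      exact ⟨hc.1, hc.2, hb.1, hb.2, hcd.1⟩

lemma noCut_iff {G : SimpleGraph V} (H : G.Subgraph) :
    NoCutVertexSub G H ↔ H.verts.Nonempty ∧ ∀ X : Set V, X.Subsingleton →
      ∀ a b, a ∈ H.verts → b ∈ H.verts → a ∉ X → b ∉ X → Av H X a b := by
  unfold NoCutVertexSub
  rw [Subgraph.connected_iff, Subgraph.preconnected_iff]
  constructor
  · rintro ⟨⟨h1, h2⟩, h3⟩
    refine ⟨h2, fun X hX => ?_⟩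
    rw [← preconn_iff]
    rcases hX.eq_empty_or_singleton with rfl | ⟨x, rfl⟩
    · rw [Subgraph.deleteVerts_empty]; exact h1
    · exact h3 x
  · rintro ⟨h1, h2⟩
    refine ⟨⟨?_, h1⟩, fun x => ?_⟩
    · have := (preconn_iff H ∅).2 (h2 ∅ Set.subsingleton_empty)
      rwa [Subgraph.deleteVerts_empty] at this
    · exact (preconn_iff H {x}).2 (h2 {x} Set.subsingleton_singleton)

lemma av_of_walk {G : SimpleGraph V} {H : G.Subgraph} {X : Set V} {a b : V} (p : G.Walk a b)
    (hp : ∀ x y, s(x, y) ∈ p.edges → H.Adj x y) (hX : ∀ x ∈ p.support, x ∉ X) : Av H X a b := by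
  induction p with
  | nil => exact .refl
  | @cons u v w h p ih =>
    refine Relation.ReflTransGen.head ⟨hp _ _ (by simp), hX _ (by simp), hX _ (by simp)⟩
      (ih (fun x y hxy => hp x y (by simp [hxy])) (fun x hx => hX x (by simp [hx])))

lemma path_av {G : SimpleGraph V} {H : G.Subgraph} {X : Set V} (hX : X.Subsingleton) {a b : V}
    (p : G.Walk a b) (hpp : p.IsPath)
    (hp : ∀ x y, s(x, y) ∈ p.edges → H.Adj x y) (w : V) (hw : w ∈ p.support) (hwX : w ∉ X) :
    ∃ z, (z = a ∨ z = b) ∧ z ∉ X ∧ Av H X w z := by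
  obtain ⟨q, r, rfl⟩ := p.mem_support_iff_exists_append.mp hw
  by_cases hq : ∀ x ∈ q.support, x ∉ X
  · exact ⟨a, .inl rfl, hq a (by simp), (av_of_walk q (fun x y h => hp x y (by simp [h])) hq).symm⟩
  · push Not at hq
    obtain ⟨x, hxq, hxX⟩ := hq
    have hr : ∀ y ∈ r.support, y ∉ X := by
      intro y hy hyX
      have hyx : y = x := hX hyX hxX
      subst hyx
      have hyw : y ≠ w := by rintro rfl; exact hwX hyX
      exact hpp.ne_of_mem_support_of_append hyw hxq hy rfl
    exact ⟨b, .inr rfl, hr b (by simp), av_of_walk r (fun x y h => hp x y (by simp [h])) hr⟩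

lemma noCut_of_two {G : SimpleGraph V} {H : G.Subgraph} (a b : V) (ha : a ∈ H.verts)
    (h1 : ∀ X : Set V, X.Subsingleton → ∀ w ∈ H.verts, w ∉ X →
      ∃ z, (z = a ∨ z = b) ∧ z ∉ X ∧ Av H X w z)
    (h2 : ∀ X : Set V, X.Subsingleton → a ∉ X → b ∉ X → Av H X a b) : NoCutVertexSub G H := by
  rw [noCut_iff]
  refine ⟨⟨a, ha⟩, fun X hX x y hx hy hxX hyX => ?_⟩
  obtain ⟨z, hz, hzX, hxz⟩ := h1 X hX x hx hxX
  obtain ⟨z', hz', hzX', hyz⟩ := h1 X hX y hy hyX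
  have : Av H X z z' := by
    rcases hz with rfl | rfl <;> rcases hz' with rfl | rfl
    · exact .refl
    · exact h2 X hX hzX hzX'
    · exact (h2 X hX hzX' hzX).symm
    · exact .refl
  exact hxz.trans (this.trans hyz.symm)

/-- Paths between two distinct vertices of a block stay in the block. -/
lemma block_path {G : SimpleGraph V} {B : G.Subgraph} (hB : IsBlock G B) {a b : V}
    (ha : a ∈ B.verts) (hb : b ∈ B.verts) (hab : a ≠ b) (p : G.Walk a b) (hp : p.IsPath) :
    p.toSubgraph ≤ B := by
  have hBn := (noCut_iff B).1 hB.1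
  have key : NoCutVertexSub G (B ⊔ p.toSubgraph) := by
    refine noCut_of_two a b (by simp [ha]) ?_ ?_
    · intro X hX w hw hwX
      rw [Subgraph.verts_sup] at hw
      rcases hw with hw | hw
      · by_cases haX : a ∈ X
        · have hbX : b ∉ X := fun hbX => hab (hX haX hbX)
          exact ⟨b, .inr rfl, hbX, (hBn.2 X hX w b hw hb hwX hbX).mono le_sup_left⟩
        · exact ⟨a, .inl rfl, haX, (hBn.2 X hX w a hw ha hwX haX).mono le_sup_left⟩
      · refine path_av hX p hp ?_ w (by simpa using hw) hwX
        intro x y hxy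
        rw [Subgraph.sup_adj]
        right
        rwa [Walk.adj_toSubgraph_iff_mem_edges]
    · intro X hX haX hbX
      exact (hBn.2 X hX a b ha hb haX hbX).mono le_sup_left
  have := hB.2 _ key le_sup_left
  rw [this]; exact le_sup_right

lemma exists_block {G : SimpleGraph V} [Fintype V] {H : G.Subgraph} (hH : NoCutVertexSub G H) :
    ∃ B, IsBlock G B ∧ H ≤ B := by
  obtain ⟨B, hHB, hB⟩ := Set.Finite.exists_le_maximal
    (Set.toFinite {H : G.Subgraph | NoCutVertexSub G H}) hH
  exact ⟨B, ⟨hB.1, fun K hK hle => le_antisymm hle (hB.2 hK hle)⟩, hHB⟩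

/-- Vertices that are not separated by a third vertex share a block. -/
lemma common_block {G : SimpleGraph V} [Fintype V] (hG : G.Connected) (u v : V)
    (hsep : ∀ x, x ≠ u → x ≠ v → ∃ p : G.Walk u v, x ∉ p.support) :
    ∃ B, IsBlock G B ∧ u ∈ B.verts ∧ v ∈ B.verts := by
  set S : Set V := {w | ∃ p : G.Walk u v, p.IsPath ∧ w ∈ p.support} with hS
  have hadj : ∀ p : G.Walk u v, p.IsPath → ∀ x y, s(x, y) ∈ p.edges →
      ((⊤ : G.Subgraph).induce S).Adj x y := by
    intro p hp x y hxy
    rw [Subgraph.induce_adj]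
    refine ⟨⟨p, hp, p.fst_mem_support_of_mem_edges hxy⟩,
      ⟨p, hp, p.snd_mem_support_of_mem_edges hxy⟩, ?_⟩
    simpa using p.adj_of_mem_edges hxy
  obtain ⟨p0, hp0, -⟩ := hG.exists_path_of_dist u v
  have hu : u ∈ S := ⟨p0, hp0, by simp⟩
  have hv : v ∈ S := ⟨p0, hp0, by simp⟩
  have key : NoCutVertexSub G ((⊤ : G.Subgraph).induce S) := by
    refine noCut_of_two u v hu ?_ ?_
    · rintro X hX w ⟨p, hp, hw⟩ hwX
      exact path_av hX p hp (hadj p hp) w hw hwX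
    · intro X hX huX hvX
      rcases hX.eq_empty_or_singleton with rfl | ⟨x, rfl⟩
      · exact av_of_walk p0 (hadj p0 hp0) (by simp)
      · obtain ⟨p, hp⟩ := hsep x (fun h => huX (by simp [h])) (fun h => hvX (by simp [h]))
        refine av_of_walk p.bypass (hadj _ p.bypass_isPath) ?_
        rintro y hy rfl
        exact hp (p.support_bypass_subset_support hy)
  obtain ⟨B, hB, hle⟩ := exists_block key
  exact ⟨B, hB, hle.1 hu, hle.1 hv⟩

lemma closer_of_mem {G : SimpleGraph V} (hG : G.Connected) {u s t y : V}
    (hlt : G.dist u s < G.dist u t) (p : G.Walk u s) (hp : p.length = G.dist u s)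
    (hy : y ∈ p.support) : G.dist y s < G.dist y t := by
  obtain ⟨q, r, rfl⟩ := p.mem_support_iff_exists_append.mp hy
  have h1 := G.dist_le q
  have h2 := G.dist_le r
  have h3 : G.dist u t ≤ G.dist u y + G.dist y t := hG.dist_triangle
  rw [Walk.length_append] at hp
  omega

lemma block_of_disp_aux {G : SimpleGraph V} (hG : G.Connected) {B : G.Subgraph} (hB : IsBlock G B)
    {u v s t : V} (hu : u ∈ B.verts) (hv : v ∈ B.verts) (hst : G.Adj s t)
    (h1 : G.dist u s < G.dist u t) (h2 : G.dist v t < G.dist v s) : B.Adj s t := by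
  have huv : u ≠ v := by rintro rfl; omega
  obtain ⟨p, hp, hpl⟩ := hG.exists_path_of_dist u s
  obtain ⟨q, hq, hql⟩ := hG.exists_path_of_dist v t
  have hpath : (p.append (Walk.cons hst q.reverse)).IsPath := by
    rw [Walk.isPath_def, Walk.support_append, Walk.support_cons, List.tail_cons,
      List.nodup_append]
    refine ⟨hp.support_nodup, hq.reverse.support_nodup, ?_⟩
    rintro a ha b hb rfl
    have := closer_of_mem hG h1 p hpl ha
    have := closer_of_mem hG h2 q hql (by simpa using hb)
    omega
  have := block_path hB hu hv huv _ hpath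
  apply this.2
  rw [Walk.adj_toSubgraph_iff_mem_edges]
  simp

lemma block_of_disp {G : SimpleGraph V} (hG : G.Connected) {B : G.Subgraph} (hB : IsBlock G B)
    {u v s t : V} (hu : u ∈ B.verts) (hv : v ∈ B.verts) (hst : G.Adj s t)
    (h : IsDisparate G u v s(s, t)) : B.Adj s t := by
  rcases h with ⟨h1, h2⟩ | ⟨h1, h2⟩
  · exact block_of_disp_aux hG hB hu hv hst h1 h2
  · exact (block_of_disp_aux hG hB hu hv hst.symm h1 h2).symm

/-- A cyclic parametrization of a subgraph. -/
structure CycParam {G : SimpleGraph V} (B : G.Subgraph) (n : ℕ) (c : ℕ → V) : Prop where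
  h3 : 3 ≤ n
  per : c n = c 0
  inj : ∀ i j, i < n → j < n → c i = c j → i = j
  verts : ∀ x, x ∈ B.verts ↔ ∃ i < n, x = c i
  adj : ∀ x y, B.Adj x y ↔ ∃ i < n, (x = c i ∧ y = c (i + 1)) ∨ (y = c i ∧ x = c (i + 1))

open Fin.CommRing in
lemma exists_cycParam {G : SimpleGraph V} {B : G.Subgraph} {n : ℕ} (hn : 3 ≤ n)
    (φ : B.coe ≃g cycleGraph n) (u : V) (hu : u ∈ B.verts) :
    ∃ c : ℕ → V, c 0 = u ∧ CycParam B n c := by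
  obtain ⟨m, rfl⟩ : ∃ m, n = m + 2 := ⟨n - 2, by omega⟩
  set k := φ ⟨u, hu⟩ with hk
  have hval : ∀ i j, i < m + 2 → j < m + 2 → ((i : ℕ) : Fin (m + 2)) = (j : ℕ) → i = j := by
    intro i j hi hj h
    have := congrArg Fin.val h
    rwa [Fin.val_natCast, Fin.val_natCast, Nat.mod_eq_of_lt hi, Nat.mod_eq_of_lt hj] at this
  have hsur : ∀ x (hx : x ∈ B.verts), ∃ i < m + 2, x = (φ.symm (k + ((i : ℕ) : Fin (m + 2)))).1 := by
    intro x hx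
    refine ⟨(φ ⟨x, hx⟩ - k).val, (φ ⟨x, hx⟩ - k).isLt, ?_⟩
    simp
  have hinj : ∀ a b : Fin (m + 2), (φ.symm a).1 = (φ.symm b).1 → a = b := by
    intro a b h
    exact φ.symm.injective (Subtype.ext h)
  refine ⟨fun i => (φ.symm (k + ((i : ℕ) : Fin (m + 2)))).1, by simp [hk], hn, ?_, ?_, ?_, ?_⟩
  · simp
  · intro i j hi hj h
    have := hinj _ _ h
    exact hval i j hi hj (add_left_cancel this)
  · intro x
    refine ⟨hsur x, ?_⟩
    rintro ⟨i, -, rfl⟩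
    exact Subtype.coe_prop _
  · intro x y
    have hadj : ∀ a b : Fin (m + 2), B.Adj (φ.symm a).1 (φ.symm b).1 ↔ a - b = 1 ∨ b - a = 1 := by
      intro a b
      rw [← cycleGraph_adj, ← φ.symm.map_adj_iff, Subgraph.coe_adj]
    constructor
    · intro h
      obtain ⟨i, hi, rfl⟩ := hsur x (B.edge_vert h)
      obtain ⟨j, hj, rfl⟩ := hsur y (B.edge_vert h.symm)
      rw [hadj] at h
      rcases h with h | h
      · refine ⟨j, hj, .inr ⟨rfl, ?_⟩⟩
        have : k + ((i : ℕ) : Fin (m + 2)) = k + ((j + 1 : ℕ) : Fin (m + 2)) := by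
          push_cast
          rw [← h]; abel
        simp only [this]
      · refine ⟨i, hi, .inl ⟨rfl, ?_⟩⟩
        have : k + ((j : ℕ) : Fin (m + 2)) = k + ((i + 1 : ℕ) : Fin (m + 2)) := by
          push_cast
          rw [← h]; abel
        simp only [this]
    · rintro ⟨i, hi, ⟨rfl, rfl⟩ | ⟨rfl, rfl⟩⟩
      · rw [hadj]; right; push_cast; abel
      · rw [hadj]; left; push_cast; abel

/-- Distance on a cycle of length `n`. -/
def cd (n i j : ℕ) : ℕ := min (max i j - min i j) (n - (max i j - min i j))

lemma cyc_adj {G : SimpleGraph V} {B : G.Subgraph} {n : ℕ} {c : ℕ → V} (h : CycParam B n c)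
    (i : ℕ) (hi : i < n) : G.Adj (c i) (c (i + 1)) :=
  B.adj_sub ((h.adj _ _).2 ⟨i, hi, .inl ⟨rfl, rfl⟩⟩)

lemma cyc_ub1 {G : SimpleGraph V} (hG : G.Connected) {B : G.Subgraph} {n : ℕ} {c : ℕ → V}
    (h : CycParam B n c) (i d : ℕ) (hi : i + d ≤ n) : G.dist (c i) (c (i + d)) ≤ d := by
  induction d with
  | zero => simp
  | succ d ih =>
    have h1 := ih (by omega)
    have h2 := cyc_adj h (i + d) (by omega)
    rw [← SimpleGraph.dist_eq_one_iff_adj] at h2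
    have h3 : G.dist (c i) (c (i + d + 1)) ≤ _ := hG.dist_triangle (v := c (i + d))
    rw [← add_assoc]
    omega

lemma cyc_ub2 {G : SimpleGraph V} (hG : G.Connected) {B : G.Subgraph} {n : ℕ} {c : ℕ → V}
    (h : CycParam B n c) (i j : ℕ) (hij : i ≤ j) (hj : j ≤ n) :
    G.dist (c i) (c j) ≤ cd n i j := by
  have h1 := cyc_ub1 hG h i (j - i) (by omega)
  have h2 := cyc_ub1 hG h j (n - j) (by omega)
  have h3 := cyc_ub1 hG h 0 i (by omega)
  rw [show i + (j - i) = j by omega] at h1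
  rw [show j + (n - j) = n by omega, h.per] at h2
  rw [Nat.zero_add] at h3
  have h4 : G.dist (c j) (c i) ≤ _ := hG.dist_triangle (v := c 0)
  rw [SimpleGraph.dist_comm] at h4
  unfold cd
  omega

lemma cyc_lb {G : SimpleGraph V} {B : G.Subgraph} {n : ℕ} {c : ℕ → V}
    (h : CycParam B n c) {a b : V} (p : G.Walk a b) (hp : ∀ x y, s(x, y) ∈ p.edges → B.Adj x y)
    (i j : ℕ) (hi : i < n) (hj : j < n) (ha : a = c i) (hb : b = c j) : cd n i j ≤ p.length := by
  have h3 := h.h3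
  induction p generalizing i with
  | nil =>
    have := h.inj i j hi hj (ha ▸ hb)
    subst this
    simp [cd]
  | @cons x y z hxy p ih =>
    have h1 : B.Adj x y := hp _ _ (by simp)
    rw [h.adj] at h1
    have ih' := ih (fun x y hxy => hp x y (by simp [hxy]))
    rw [Walk.length_cons]
    have lift : ∀ k, k ≤ n → ∃ k' < n, c k = c k' ∧ (k' = k ∨ (k = n ∧ k' = 0)) := by
      intro k hk
      by_cases hkn : k = n
      · exact ⟨0, by omega, by rw [hkn, h.per], .inr ⟨hkn, rfl⟩⟩
      · exact ⟨k, by omega, rfl, .inl rfl⟩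
    obtain ⟨k, hk, ⟨h4, h5⟩ | ⟨h4, h5⟩⟩ := h1
    · have := h.inj i k hi hk (ha ▸ h4)
      subst this
      obtain ⟨k', hk', hc, hor⟩ := lift (i + 1) hk
      have := ih' k' hk' (h5.trans hc) hb
      unfold cd at *
      omega
    · obtain ⟨k', hk', hc, hor⟩ := lift (k + 1) hk
      have := h.inj i k' hi hk' (by rw [← ha, h5, hc])
      subst this
      have := ih' k hk h4 hb
      unfold cd at *
      omega

lemma cyc_dist {G : SimpleGraph V} (hG : G.Connected) {B : G.Subgraph} (hB : IsBlock G B)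
    {n : ℕ} {c : ℕ → V} (h : CycParam B n c) (i j : ℕ) (hi : i < n) (hj : j < n) :
    G.dist (c i) (c j) = cd n i j := by
  apply le_antisymm
  · rcases le_total i j with hij | hij
    · exact cyc_ub2 hG h i j hij hj.le
    · rw [SimpleGraph.dist_comm]
      have := cyc_ub2 hG h j i hij hi.le
      unfold cd at *
      omega
  · by_cases hij : i = j
    · subst hij; simp [cd]
    · obtain ⟨p, hp, hpl⟩ := hG.exists_path_of_dist (c i) (c j)
      rw [← hpl]
      refine cyc_lb h p ?_ i j hi hj rfl rfl
      have hle := block_path hB ((h.verts _).2 ⟨i, hi, rfl⟩) ((h.verts _).2 ⟨j, hj, rfl⟩)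
        (fun e => hij (h.inj i j hi hj e)) p hp
      intro x y hxy
      apply hle.2
      rwa [Walk.adj_toSubgraph_iff_mem_edges]

lemma cyc_dist' {G : SimpleGraph V} (hG : G.Connected) {B : G.Subgraph} (hB : IsBlock G B)
    {n : ℕ} {c : ℕ → V} (h : CycParam B n c) (i j : ℕ) (hi : i < n) (hj : j ≤ n) :
    G.dist (c i) (c j) = cd n i j := by
  by_cases hjn : j = n
  · subst hjn
    rw [h.per, cyc_dist hG hB h i 0 hi (by omega)]
    unfold cd; omega
  · exact cyc_dist hG hB h i j hi (by omega)

lemma cyc_edge_inj {G : SimpleGraph V} {B : G.Subgraph} {n : ℕ} {c : ℕ → V}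
    (h : CycParam B n c) (i j : ℕ) (hi : i < n) (hj : j < n)
    (he : s(c i, c (i + 1)) = s(c j, c (j + 1))) : i = j := by
  have h3 := h.h3
  rw [Sym2.eq_iff] at he
  rcases he with ⟨h1, -⟩ | ⟨h1, h2⟩
  · exact h.inj i j hi hj h1
  · have lift : ∀ k, k < n → ∃ k' < n, c (k + 1) = c k' ∧ (k' = k + 1 ∨ (k + 1 = n ∧ k' = 0)) := by
      intro k hk
      by_cases hkn : k + 1 = n
      · exact ⟨0, by omega, by rw [hkn, h.per], .inr ⟨hkn, rfl⟩⟩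
      · exact ⟨k + 1, by omega, rfl, .inl rfl⟩
    obtain ⟨a, ha, hca, hoa⟩ := lift i hi
    obtain ⟨b, hb, hcb, hob⟩ := lift j hj
    have e1 := h.inj i b hi hb (h1.trans hcb)
    have e2 := h.inj a j ha hj (hca.symm.trans h2)
    omega

lemma disCount_comm [Fintype V] (G : SimpleGraph V) (u v : V) :
    disCount G u v = disCount G v u := by
  unfold disCount
  congr 1
  apply Finset.filter_congr
  intro e _
  induction e with
  | _ s t =>
    simp only [IsDisparate, Sym2.lift_mk]
    constructor <;> (intro h; omega)

lemma cyc_disCount [Fintype V] {G : SimpleGraph V} (hG : G.Connected) {B : G.Subgraph}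
    (hB : IsBlock G B) {n : ℕ} {c : ℕ → V} (h : CycParam B n c) (d : ℕ) (hd : 0 < d)
    (hdn : 2 * d ≤ n) :
    disCount G (c 0) (c d) = if n % 2 = 0 then 2 * d else 2 * d - 1 := by
  have h3 := h.h3
  set T : Finset ℕ := Finset.range d ∪ Finset.Ico ((n + 1) / 2) (n / 2 + d) with hT
  have hTn : ∀ i ∈ T, i < n := by
    intro i hi
    simp only [hT, Finset.mem_union, Finset.mem_range, Finset.mem_Ico] at hi
    omega
  have himg : G.edgeFinset.filter (IsDisparate G (c 0) (c d)) =
      T.image (fun i => s(c i, c (i + 1))) := by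
    have hdisp : ∀ i < n, IsDisparate G (c 0) (c d) s(c i, c (i + 1)) ↔ i ∈ T := by
      intro i hi
      simp only [IsDisparate, Sym2.lift_mk]
      rw [cyc_dist' hG hB h 0 i (by omega) (by omega),
        cyc_dist' hG hB h 0 (i + 1) (by omega) (by omega),
        cyc_dist' hG hB h d i (by omega) (by omega),
        cyc_dist' hG hB h d (i + 1) (by omega) (by omega)]
      simp only [hT, Finset.mem_union, Finset.mem_range, Finset.mem_Ico]
      unfold cd
      omega
    ext e
    rw [Finset.mem_filter, Finset.mem_image]
    constructor
    · rintro ⟨he, hdis⟩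
      induction e with
      | _ s t =>
        rw [SimpleGraph.mem_edgeFinset, SimpleGraph.mem_edgeSet] at he
        have hBst := block_of_disp hG hB ((h.verts _).2 ⟨0, by omega, rfl⟩)
          ((h.verts _).2 ⟨d, by omega, rfl⟩) he hdis
        obtain ⟨i, hi, ⟨rfl, rfl⟩ | ⟨rfl, rfl⟩⟩ := (h.adj _ _).1 hBst
        · exact ⟨i, (hdisp i hi).1 hdis, rfl⟩
        · rw [Sym2.eq_swap] at hdis
          exact ⟨i, (hdisp i hi).1 hdis, Sym2.eq_swap⟩
    · rintro ⟨i, hi, rfl⟩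
      refine ⟨?_, (hdisp i (hTn i hi)).2 hi⟩
      rw [SimpleGraph.mem_edgeFinset, SimpleGraph.mem_edgeSet]
      exact cyc_adj h i (hTn i hi)
  unfold disCount
  rw [himg, Finset.card_image_of_injOn, hT, Finset.card_union_of_disjoint]
  · rw [Finset.card_range, Nat.card_Ico]
    split_ifs <;> omega
  · rw [Finset.disjoint_left]
    intro i hi hi'
    simp only [Finset.mem_range, Finset.mem_Ico] at hi hi'
    omega
  · intro i hi j hj hij
    exact cyc_edge_inj h i j (hTn i hi) (hTn j hj) hij

lemma cyc_rev {G : SimpleGraph V} {B : G.Subgraph} {n : ℕ} {c : ℕ → V}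
    (h : CycParam B n c) : CycParam B n (fun i => c (n - i)) := by
  have h3 := h.h3
  refine ⟨h.h3, ?_, ?_, ?_, ?_⟩
  · simp [h.per]
  · have aux : ∀ i < n, ∃ k < n, c (n - i) = c k ∧ (i = 0 ∧ k = 0 ∨ 0 < i ∧ k = n - i) := by
      intro i hi
      by_cases h0 : i = 0
      · exact ⟨0, by omega, by rw [h0, Nat.sub_zero, h.per], .inl ⟨h0, rfl⟩⟩
      · exact ⟨n - i, by omega, rfl, .inr ⟨by omega, rfl⟩⟩
    intro i j hi hj hij
    obtain ⟨a, ha, hca, hoa⟩ := aux i hi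
    obtain ⟨b, hb, hcb, hob⟩ := aux j hj
    have := h.inj a b ha hb (by rw [← hca, ← hcb]; exact hij)
    omega
  · intro x
    rw [h.verts]
    constructor
    · rintro ⟨i, hi, rfl⟩
      by_cases h0 : i = 0
      · exact ⟨0, by omega, by simp [h0, h.per]⟩
      · exact ⟨n - i, by omega, by congr 1; omega⟩
    · rintro ⟨i, hi, rfl⟩
      by_cases h0 : i = 0
      · exact ⟨0, by omega, by simp [h0, h.per]⟩
      · exact ⟨n - i, by omega, rfl⟩
  · intro x y
    rw [h.adj]
    constructor
    · rintro ⟨i, hi, hh⟩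
      refine ⟨n - 1 - i, by omega, ?_⟩
      simp only [show n - (n - 1 - i) = i + 1 by omega, show n - (n - 1 - i + 1) = i by omega]
      tauto
    · rintro ⟨i, hi, hh⟩
      refine ⟨n - 1 - i, by omega, ?_⟩
      simp only [show n - 1 - i + 1 = n - i by omega]
      rw [show n - (i + 1) = n - 1 - i by omega] at hh
      tauto

/-- Two distinct vertices in a cycle block. -/
lemma cycle_block_dis [Fintype V] {G : SimpleGraph V} (hG : G.Connected) {B : G.Subgraph}
    (hB : IsBlock G B) {n : ℕ} (hn : 3 ≤ n) (φ : B.coe ≃g cycleGraph n) (u v : V)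
    (hu : u ∈ B.verts) (hv : v ∈ B.verts) (huv : u ≠ v) :
    disCount G u v = if n % 2 = 0 then 2 * G.dist u v else 2 * G.dist u v - 1 := by
  have half : ∀ (c : ℕ → V), CycParam B n c → ∀ d, 0 < d → 2 * d ≤ n →
      disCount G (c 0) (c d) =
        if n % 2 = 0 then 2 * G.dist (c 0) (c d) else 2 * G.dist (c 0) (c d) - 1 := by
    intro c h d hd hdn
    rw [cyc_disCount hG hB h d hd hdn, cyc_dist hG hB h 0 d (by omega) (by omega)]
    have : cd n 0 d = d := by unfold cd; omega
    rw [this]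
  obtain ⟨c, rfl, h⟩ := exists_cycParam hn φ u hu
  obtain ⟨d, hd, rfl⟩ := (h.verts v).1 hv
  have hd0 : 0 < d := Nat.pos_of_ne_zero (by rintro rfl; exact huv rfl)
  by_cases hdn : 2 * d ≤ n
  · exact half c h d hd0 hdn
  · have h' := cyc_rev h
    have e0 : c (n - 0) = c 0 := by simpa using h.per
    have e1 : c (n - (n - d)) = c d := by congr 1; omega
    have := half _ h' (n - d) (by omega) (by omega)
    simp only [e0, e1] at this
    exact this

/-- A block which is an edge. -/
lemma edge_block_dis [Fintype V] {G : SimpleGraph V} (hG : G.Connected) {B : G.Subgraph}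
    (hB : IsBlock G B) (hE : IsEdgeBlock G B) (u v : V)
    (hu : u ∈ B.verts) (hv : v ∈ B.verts) (huv : u ≠ v) :
    disCount G u v < 2 * G.dist u v := by
  obtain ⟨a, b, hab, rfl⟩ := hE
  have hpos := hG.pos_dist_of_ne huv
  have : disCount G u v ≤ 1 := by
    unfold disCount
    rw [← Finset.card_singleton s(a, b)]
    apply Finset.card_le_card
    intro e he
    rw [Finset.mem_filter] at he
    obtain ⟨he, hdis⟩ := he
    induction e with
    | _ s t =>
      rw [SimpleGraph.mem_edgeFinset, SimpleGraph.mem_edgeSet] at he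
      have h1 := block_of_disp hG hB hu hv he hdis
      rw [subgraphOfAdj_adj] at h1
      rw [Finset.mem_singleton, h1]
  omega

/-- Additivity over a separating vertex. -/
lemma sep_dist {G : SimpleGraph V} (hG : G.Connected) {u v w : V}
    (hw : ∀ p : G.Walk u v, w ∈ p.support) : G.dist u v = G.dist u w + G.dist w v := by
  obtain ⟨p, hp⟩ := hG.exists_walk_length_eq_dist u v
  obtain ⟨q, r, rfl⟩ := p.mem_support_iff_exists_append.mp (hw p)
  have h1 := G.dist_le q
  have h2 := G.dist_le r
  have h3 : G.dist u v ≤ G.dist u w + G.dist w v := hG.dist_triangle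
  rw [Walk.length_append] at hp
  omega

lemma sep_edge {G : SimpleGraph V} {u v w s t : V} (hst : G.Adj s t)
    (hw : ∀ p : G.Walk u v, w ∈ p.support) :
    ((∀ p : G.Walk u s, w ∈ p.support) ∧ (∀ p : G.Walk u t, w ∈ p.support)) ∨
    ((∀ p : G.Walk v s, w ∈ p.support) ∧ (∀ p : G.Walk v t, w ∈ p.support)) := by
  have key : ∀ a b : V, G.Adj a b → ∀ q : G.Walk u a, w ∉ q.support →
      ((∀ p : G.Walk v a, w ∈ p.support) ∧ (∀ p : G.Walk v b, w ∈ p.support)) := by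
    intro a b hab q hq
    constructor
    · intro p
      have := hw (q.append p.reverse)
      simp only [Walk.mem_support_append_iff, Walk.support_reverse, List.mem_reverse] at this
      tauto
    · intro p
      have := hw (q.append (Walk.cons hab p.reverse))
      simp only [Walk.mem_support_append_iff, Walk.support_reverse, List.mem_reverse,
        Walk.support_cons, List.mem_cons] at this
      rcases this with h | rfl | h
      · exact absurd h hq
      · exact absurd q.end_mem_support hq
      · exact h
  by_contra! hcon
  obtain ⟨h1, h2⟩ := hcon
  by_cases hs : ∀ p : G.Walk u s, w ∈ p.support
  · obtain ⟨q, hq⟩ := h1 hs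
    obtain ⟨k1, k2⟩ := key t s hst.symm q hq
    obtain ⟨p, hp⟩ := h2 k2
    exact hp (k1 p)
  · push Not at hs
    obtain ⟨q, hq⟩ := hs
    obtain ⟨k1, k2⟩ := key s t hst q hq
    obtain ⟨p, hp⟩ := h2 k1
    exact hp (k2 p)

lemma sep_disCount [Fintype V] {G : SimpleGraph V} (hG : G.Connected) {u v w : V}
    (hw : ∀ p : G.Walk u v, w ∈ p.support) :
    disCount G u v = disCount G u w + disCount G w v := by
  have key : ∀ s t, G.Adj s t →
      (IsDisparate G u v s(s, t) ↔ (IsDisparate G u w s(s, t) ∨ IsDisparate G w v s(s, t))) ∧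
      ¬ (IsDisparate G u w s(s, t) ∧ IsDisparate G w v s(s, t)) := by
    intro s t hst
    simp only [IsDisparate, Sym2.lift_mk]
    rcases sep_edge hst hw with ⟨h1, h2⟩ | ⟨h1, h2⟩
    · have := sep_dist hG h1
      have := sep_dist hG h2
      omega
    · have := sep_dist hG h1
      have := sep_dist hG h2
      omega
  unfold disCount
  rw [← Finset.card_union_of_disjoint]
  · congr 1
    ext e
    simp only [Finset.mem_union, Finset.mem_filter, SimpleGraph.mem_edgeFinset]
    induction e with
    | _ s t =>
      rw [SimpleGraph.mem_edgeSet]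
      have := key s t
      tauto
  · rw [Finset.disjoint_left]
    intro e
    simp only [Finset.mem_filter, SimpleGraph.mem_edgeFinset]
    induction e with
    | _ s t =>
      rw [SimpleGraph.mem_edgeSet]
      have := key s t
      tauto

lemma disCount_self [Fintype V] (G : SimpleGraph V) (u : V) : disCount G u u = 0 := by
  unfold disCount
  rw [Finset.card_eq_zero, Finset.filter_eq_empty_iff]
  intro e _
  induction e with
  | _ s t =>
    simp only [IsDisparate, Sym2.lift_mk]
    omega

/-- Induction principle along separating vertices. -/
lemma block_induct [Fintype V] {G : SimpleGraph V} (hG : G.Connected) (r : ℕ → ℕ → Prop)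
    (h0 : r 0 0) (hadd : ∀ a b a' b', r a b → r a' b' → r (a + a') (b + b'))
    (hbl : ∀ B, IsBlock G B → ∀ u v, u ∈ B.verts → v ∈ B.verts → u ≠ v →
      r (disCount G u v) (2 * G.dist u v)) (u v : V) :
    r (disCount G u v) (2 * G.dist u v) := by
  induction hd : G.dist u v using Nat.strong_induction_on generalizing u v with
  | _ d ih =>
    subst hd
    by_cases huv : u = v
    · subst huv
      rw [disCount_self, SimpleGraph.dist_self]; exact h0
    by_cases hsep : ∀ x, x ≠ u → x ≠ v → ∃ p : G.Walk u v, x ∉ p.support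
    · obtain ⟨B, hB, hu, hv⟩ := common_block hG u v hsep
      exact hbl B hB u v hu hv huv
    · push Not at hsep
      obtain ⟨w, hwu, hwv, hw⟩ := hsep
      have h1 := sep_dist hG hw
      have h2 := hG.pos_dist_of_ne hwu
      have h3 := hG.pos_dist_of_ne hwv
      rw [SimpleGraph.dist_comm] at h2
      rw [sep_disCount hG hw, h1, mul_add]
      exact hadd _ _ _ _ (ih _ (by omega) u w rfl) (ih _ (by omega) w v rfl)

lemma sum_pairs [Fintype V] (f : V → V → ℕ) (hf : ∀ u v, f u v = f v u) (h0 : ∀ u, f u u = 0) :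
    ∑ p : V × V, f p.1 p.2 = 2 * ∑ p : Sym2 V, Sym2.lift ⟨f, hf⟩ p := by
  rw [← Finset.sum_fiberwise (s := (Finset.univ : Finset (V × V))) (g := fun p => s(p.1, p.2)),
    Finset.mul_sum]
  refine Finset.sum_congr rfl fun e _ => ?_
  induction e with
  | _ s t =>
    have hfil : (Finset.univ.filter fun p : V × V => s(p.1, p.2) = s(s, t)) = {(s, t), (t, s)} := by
      ext ⟨a, b⟩
      simp
    rw [hfil]
    by_cases hst : s = t
    · subst hst
      simp [h0]
    · rw [Finset.sum_pair (by simp [hst])]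
      simp only [Sym2.lift_mk]
      rw [hf t s]; ring

lemma two_wiener [Fintype V] (G : SimpleGraph V) :
    2 * wiener G = ∑ p : V × V, G.dist p.1 p.2 := by
  unfold wiener
  rw [sum_pairs (fun u v => G.dist u v) (fun _ _ => G.dist_comm) (fun u => G.dist_self)]

lemma two_szeged [Fintype V] (G : SimpleGraph V) :
    2 * szeged G = ∑ p : V × V, disCount G p.1 p.2 := by
  unfold szeged disCount
  simp only [Finset.card_filter]
  rw [Finset.sum_comm, Finset.mul_sum]
  refine Finset.sum_congr rfl fun e _ => ?_
  induction e with
  | _ s t =>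
    rw [← Finset.card_filter]
    have hfil : (Finset.univ.filter fun p : V × V => IsDisparate G p.1 p.2 s(s, t)) =
        ((Finset.univ.filter fun w => G.dist w s < G.dist w t) ×ˢ
          (Finset.univ.filter fun w => G.dist w t < G.dist w s)) ∪
        ((Finset.univ.filter fun w => G.dist w t < G.dist w s) ×ˢ
          (Finset.univ.filter fun w => G.dist w s < G.dist w t)) := by
      ext ⟨a, b⟩
      simp only [Finset.mem_union, Finset.mem_filter, Finset.mem_product, Finset.mem_univ, true_and]
      exact Iff.rfl
    rw [hfil, Finset.card_union_of_disjoint, Finset.card_product, Finset.card_product]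
    · simp only [Sym2.lift_mk, closerCount]
      ring
    · rw [Finset.disjoint_left]
      rintro ⟨a, b⟩
      simp only [Finset.mem_product, Finset.mem_filter]
      omega

lemma main [Fintype V] (G : SimpleGraph V) (hG : IsCactus G) :
    szeged G = 2 * wiener G ↔
      ∀ B : G.Subgraph, IsBlock G B →
        ∃ n : ℕ, 3 ≤ n ∧ Even n ∧ Nonempty (B.coe ≃g SimpleGraph.cycleGraph n) := by
  obtain ⟨hc, hG⟩ := hG
  have hle : ∀ u v, disCount G u v ≤ 2 * G.dist u v := by
    refine block_induct hc (· ≤ ·) le_rfl (fun _ _ _ _ h h' => add_le_add h h') ?_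
    intro B hB u v hu hv huv
    rcases hG B hB with hE | ⟨n, hn, ⟨φ⟩⟩
    · exact (edge_block_dis hc hB hE u v hu hv huv).le
    · rw [cycle_block_dis hc hB hn φ u v hu hv huv]
      split_ifs <;> omega
  have hiff : szeged G = 2 * wiener G ↔ ∀ u v, disCount G u v = 2 * G.dist u v := by
    have h1 := two_szeged G
    have h2 : 2 * (2 * wiener G) = ∑ p : V × V, 2 * G.dist p.1 p.2 := by
      rw [two_wiener, Finset.mul_sum]
    have h3 := Finset.sum_eq_sum_iff_of_le
      (s := (Finset.univ : Finset (V × V))) (fun p _ => hle p.1 p.2)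
    rw [← h1, ← h2] at h3
    constructor
    · intro h u v
      exact h3.1 (by rw [h]) (u, v) (Finset.mem_univ _)
    · intro h
      have := h3.2 (fun p _ => h p.1 p.2)
      omega
  rw [hiff]
  constructor
  · intro h B hB
    rcases hG B hB with hE | ⟨n, hn, ⟨φ⟩⟩
    · exfalso
      obtain ⟨a, b, hab, rfl⟩ := id hE
      have := edge_block_dis hc hB hE a b (by simp) (by simp) hab.ne
      rw [h] at this
      omega
    · refine ⟨n, hn, ?_, ⟨φ⟩⟩
      obtain ⟨u, hu⟩ := ((noCut_iff B).1 hB.1).1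
      obtain ⟨c, rfl, hcp⟩ := exists_cycParam hn φ u hu
      have hv : c 1 ∈ B.verts := (hcp.verts _).2 ⟨1, by omega, rfl⟩
      have huv : c 0 ≠ c 1 := fun e => by
        have := hcp.inj 0 1 (by omega) (by omega) e
        omega
      have h1 := cycle_block_dis hc hB hn φ _ _ hu hv huv
      have h2 := hc.pos_dist_of_ne huv
      rw [h] at h1
      rw [Nat.even_iff]
      split_ifs at h1 with h3
      · exact h3
      · omega
  · intro h
    refine block_induct hc (· = ·) rfl (fun _ _ _ _ h h' => by rw [h, h']) ?_
    intro B hB u v hu hv huv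
    obtain ⟨n, hn, he, ⟨φ⟩⟩ := h B hB
    rw [cycle_block_dis hc hB hn φ u v hu hv huv, if_pos (Nat.even_iff.1 he)]

end CactusSz

/-- **Theorem (equality case).** For a cactus graph `G`, `Sz(G) = 2·W(G)` if and only if
every block of `G` is a cycle of even length. -/
theorem szeged_eq_two_wiener_iff [Fintype V] (G : SimpleGraph V) (hG : IsCactus G) :
    szeged G = 2 * wiener G ↔
      ∀ B : G.Subgraph, IsBlock G B →
        ∃ n : ℕ, 3 ≤ n ∧ Even n ∧ Nonempty (B.coe ≃g SimpleGraph.cycleGraph n) := by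
  exact CactusSz.main G hG
end
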